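/- arXiv:2011.07836 — 5 statements merged into one kernel-verified Lean document; each statement's English description precedes it below -/
import Mathlib

section
/- Fractional Hardy–Poincaré inequality for Lévy–Fokker–Planck equilibria. Let d ≥ 1, s ∈ (0,1), α > s, β := 2s − α, and let M(v) := c_{α,β}⌊v⌉^{−(d+α)} be the power-law equilibrium with parameters (α,β) normalized so that ∫_{ℝ^d} ⌊v⌉^{−β} M(v) dv = 1. Then there exists λ > 0 (depending on d, s, α) such that for every measurable h : ℝ^d → ℂ with finite left-hand side, (1/4) ∬_{ℝ^d×ℝ^d} |h(v) − h(v')|² (M(v) + M(v')) / |v − v'|^{d+2s} dv dv' ≥ λ ∫_{ℝ^d} |h(v) − Ph|² ⌊v⌉^{−β} M(v) dv, where Ph := ∫_{ℝ^d} h(v) ⌊v⌉^{−β} M(v) dv. -/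
open MeasureTheory Real Filter Topology intervalIntegral
open scoped InnerProductSpace

noncomputable section

/-- The velocity space `ℝ^d`. -/
abbrev Vs (d : ℕ) := EuclideanSpace ℝ (Fin d)

/-- Japanese bracket `⌊v⌉ = √(1+|v|²)`. -/
def jb {d : ℕ} (v : Vs d) : ℝ := Real.sqrt (1 + ‖v‖ ^ 2)

/-- Normalisation constant `c_{α,β}`. -/
def cNorm (d : ℕ) (α β : ℝ) : ℝ := (∫ v : Vs d, jb v ^ (-(d : ℝ) - α - β))⁻¹

/-- Power-law equilibrium `M(v) = c_{α,β} ⌊v⌉^{-(d+α)}`. -/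
def Meq (d : ℕ) (α β : ℝ) (v : Vs d) : ℝ := cNorm d α β * jb v ^ (-(d : ℝ) - α)

/-- `M_β = ⌊·⌉^{-β} M`. -/
def Mbeta (d : ℕ) (α β : ℝ) (v : Vs d) : ℝ := jb v ^ (-β) * Meq d α β v

/-- Squared weighted norm `‖h‖_k² = ∫ (1+|v|²)^k |h|² M dv`. -/
def wnSq (d : ℕ) (α β k : ℝ) (h : Vs d → ℂ) : ℝ :=
  ∫ v : Vs d, (1 + ‖v‖ ^ 2) ^ k * ‖h v‖ ^ 2 * Meq d α β v

/-- Weighted norm `‖h‖_k = ‖(1+|·|²)^{k/2} h‖_{L²(M)}`. -/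
def wn (d : ℕ) (α β k : ℝ) (h : Vs d → ℂ) : ℝ := Real.sqrt (wnSq d α β k h)

/-- Projection `P h = ∫ h M_β dv`. -/
def Pavg (d : ℕ) (α β : ℝ) (h : Vs d → ℂ) : ℂ := ∫ v : Vs d, h v * (Mbeta d α β v : ℂ)

/-- Real part of the `L²(M)` scalar product `⟨f,g⟩`. -/
def reInnerM (d : ℕ) (α β : ℝ) (f g : Vs d → ℂ) : ℝ :=
  ∫ v : Vs d, (f v * (starRingEnd ℂ) (g v)).re * Meq d α β v

/-- The `L²(M)` scalar product `⟨f,g⟩`. -/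
def cInnerM (d : ℕ) (α β : ℝ) (f g : Vs d → ℂ) : ℂ :=
  ∫ v : Vs d, f v * (starRingEnd ℂ) (g v) * (Meq d α β v : ℂ)

/-- Membership in `L²(⌊·⌉^{-β} M dv)`. -/
def MemL2w (d : ℕ) (α β : ℝ) (h : Vs d → ℂ) : Prop :=
  AEStronglyMeasurable h (volume : Measure (Vs d)) ∧
    Integrable (fun v : Vs d => ‖h v‖ ^ 2 * jb v ^ (-β) * Meq d α β v)

/-- The scaling function `Θ(η)`. -/
def ThetaFn (α β η : ℝ) : ℝ :=
  if 2 + β < α then η ^ 2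
  else if α = 2 + β then η ^ 2 * |Real.log η|
  else η ^ ((α + β) / (1 + β))

/-- Weighted coercivity (spectral gap) hypothesis. -/
def Coercive (d : ℕ) (α β lam : ℝ) (L : (Vs d → ℂ) → Vs d → ℂ) : Prop :=
  ∀ h : Vs d → ℂ,
    lam * wnSq d α β (-β) (fun v => h v - Pavg d α β h) ≤ - reInnerM d α β (L h) h

/-- Amplitude of collisions at large velocities hypothesis. -/
def LargeV (d : ℕ) (α β : ℝ) (L : (Vs d → ℂ) → Vs d → ℂ) : Prop :=
  ∀ χ : Vs d → ℝ, ContDiff ℝ (⊤ : ℕ∞) χ → (∀ v, 0 ≤ χ v) → (∀ v, χ v ≤ 1) →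
    (∀ v, ‖v‖ ≤ 1 → χ v = 1) → (∀ v, 2 ≤ ‖v‖ → χ v = 0) →
    ∃ C > 0, ∀ R : ℝ, 1 ≤ R →
      wn d α β β (L (fun w => ((χ (R⁻¹ • w) : ℝ) : ℂ))) ≤ C * R ^ (-((α + β) / 2))

/-- `L` commutes with rotations in `v`. -/
def CommutesWithRotations (d : ℕ) (L : (Vs d → ℂ) → Vs d → ℂ) : Prop :=
  ∀ (O : Vs d ≃ₗᵢ[ℝ] Vs d) (f : Vs d → ℂ), L (fun v => f (O v)) = fun v => L f (O v)

/-- The fluid-mode eigenequation `-L*φ - iη(v·σ)φ = μ ⌊v⌉^{-β} φ`. -/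
def FluidEq (d : ℕ) (β : ℝ) (Lstar : (Vs d → ℂ) → Vs d → ℂ) (η : ℝ) (σ : Vs d)
    (φ : Vs d → ℂ) (μ : ℂ) : Prop :=
  ∀ v : Vs d, -(Lstar φ v) - Complex.I * (η : ℂ) * ((⟪v, σ⟫_ℝ : ℝ) : ℂ) * φ v
      = μ * ((jb v ^ (-β) : ℝ) : ℂ) * φ v

/-- `|u|_η = (η^{2/(1+β)} + |u|²)^{1/2}`. -/
def uabsEta (β η : ℝ) {d : ℕ} (u : Vs d) : ℝ := Real.sqrt (η ^ ((2 : ℝ) / (1 + β)) + ‖u‖ ^ 2)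

/-- Rescaled fluid mode `Φ_η(u) = φ_η(η^{-1/(1+β)} u)`. -/
def rescMode (β : ℝ) {d : ℕ} (φ : Vs d → ℂ) (η : ℝ) (u : Vs d) : ℂ :=
  φ ((η ^ (-(1 : ℝ) / (1 + β))) • u)

/-- Diffusion exponent `ζ`. -/
def zetaExp (α β : ℝ) : ℝ := if 2 + β ≤ α then 2 else (α + β) / (1 + β)

/-- Scaling function `θ(ε)`. -/
def thetaFn (α β ε : ℝ) : ℝ :=
  if α = 2 + β then ε ^ 2 * |Real.log ε|
  else if α = 0 then ε ^ (β / (1 + β)) / |Real.log ε|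
  else ε ^ zetaExp α β

/-- Laplacian of a real-valued function on `ℝ^d`. -/
def laplR {d : ℕ} (f : Vs d → ℝ) (v : Vs d) : ℝ :=
  ∑ i : Fin d,
    fderiv ℝ (fun w => fderiv ℝ f w (EuclideanSpace.single i 1)) v (EuclideanSpace.single i 1)

/-- Laplacian of a complex-valued function on `ℝ^d`. -/
def laplC {d : ℕ} (f : Vs d → ℂ) (v : Vs d) : ℂ :=
  ∑ i : Fin d,
    fderiv ℝ (fun w => fderiv ℝ f w (EuclideanSpace.single i 1)) v (EuclideanSpace.single i 1)

/-- Spatial Fourier transform. -/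
def FTr {d : ℕ} (g : Vs d → ℂ) (ξ : Vs d) : ℂ :=
  ∫ x : Vs d, Complex.exp (((-(2 * Real.pi * ⟪x, ξ⟫_ℝ)) : ℝ) * Complex.I) * g x

/-- Squared norm `‖m(∇_x) g‖²_{H^{-ζ}_x L²_v(M_β)}`. -/
def mixSq (d : ℕ) (α β ζ : ℝ) (m : Vs d → ℝ) (g : Vs d → Vs d → ℂ) : ℝ :=
  ∫ ξ : Vs d, ∫ v : Vs d,
    (1 + ‖ξ‖ ^ 2) ^ (-ζ) * (m ξ) ^ 2 * ‖FTr (fun x => g x v) ξ‖ ^ 2 * Mbeta d α β v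

/-- Squared weighted `L²_{x,v}(M)` norm. -/
def xvNormSq (d : ℕ) (α β k : ℝ) (g : Vs d → Vs d → ℂ) : ℝ :=
  ∫ x : Vs d, ∫ v : Vs d, (1 + ‖v‖ ^ 2) ^ k * ‖g x v‖ ^ 2 * Meq d α β v

/-- Surface measure on the unit sphere of `ℝ^d`. -/
def sphMeasure (d : ℕ) : Measure (Metric.sphere (0 : Vs d) 1) :=
  (volume : Measure (Vs d)).toSphere

/-- `|S^{d-1}|`. -/
def sphArea (d : ℕ) : ℝ := (sphMeasure d Set.univ).toReal

lemma jb_pos {d : ℕ} (v : Vs d) : 0 < jb v := by unfold jb; positivity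

lemma one_le_jb {d : ℕ} (v : Vs d) : 1 ≤ jb v := by
  unfold jb; rw [Real.one_le_sqrt]; nlinarith [sq_nonneg ‖v‖]

lemma norm_le_jb {d : ℕ} (v : Vs d) : ‖v‖ ≤ jb v := by
  unfold jb; apply Real.le_sqrt_of_sq_le; linarith

lemma integrable_jb (d : ℕ) (s : ℝ) (hs : 0 < s) :
    Integrable (fun v : Vs d => jb v ^ (-(d : ℝ) - 2 * s)) := by
  have h := integrable_rpow_neg_one_add_norm_sq (E := Vs d) (μ := volume)
    (r := (d : ℝ) + 2 * s) (by simp; linarith)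
  refine h.congr (Eventually.of_forall fun v => ?_)
  simp only [jb]
  rw [Real.sqrt_eq_rpow, ← Real.rpow_mul (by positivity)]
  congr 1; ring

lemma integral_jb_pos (d : ℕ) (s : ℝ) (hs : 0 < s) :
    0 < ∫ v : Vs d, jb v ^ (-(d : ℝ) - 2 * s) := by
  rw [integral_pos_iff_support_of_nonneg (fun v => (Real.rpow_pos_of_pos (jb_pos v) _).le)
    (integrable_jb d s hs)]
  have : Function.support (fun v : Vs d => jb v ^ (-(d : ℝ) - 2 * s)) = Set.univ := by
    ext v; simp [(Real.rpow_pos_of_pos (jb_pos v) _).ne']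
  rw [this]
  exact (Measure.measure_univ_pos).2 (NeZero.ne _)

/-- Variance is minimal around the mean. -/
lemma variance_le {d : ℕ} (w : Vs d → ℝ) (hw0 : ∀ v, 0 ≤ w v) (hw : Integrable w)
    (hw1 : ∫ v, w v = 1) (h : Vs d → ℂ) (hm : AEStronglyMeasurable h volume) (a : ℂ)
    (hi : Integrable (fun v => ‖h v - a‖ ^ 2 * w v)) :
    ∫ v, ‖h v - ∫ u, h u * (w u : ℂ)‖ ^ 2 * w v ≤ ∫ v, ‖h v - a‖ ^ 2 * w v := by
  have hg : Integrable (fun v => w v • (h v - a)) := by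
    refine (hi.add hw).mono' (hw.aestronglyMeasurable.smul (hm.sub aestronglyMeasurable_const))
      (Eventually.of_forall fun v => ?_)
    simp only [norm_smul, Real.norm_eq_abs, abs_of_nonneg (hw0 v), Pi.add_apply]
    nlinarith [hw0 v, mul_nonneg (hw0 v) (sq_nonneg (‖h v - a‖ - 1)),
      mul_nonneg (hw0 v) (sq_nonneg (‖h v - a‖))]
  have hwa : Integrable (fun v => w v • a) := hw.smul_const a
  set P : ℂ := ∫ u, h u * (w u : ℂ) with hP
  have hq : ∫ v, w v • (h v - a) = P - a := by
    have e : (fun v => h v * (w v : ℂ)) = fun v => w v • (h v - a) + w v • a := by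
      ext v; simp [Complex.real_smul]; ring
    rw [hP, e, integral_add hg hwa, _root_.integral_smul_const, hw1]; simp
  have hin : Integrable (fun v => inner ℝ (P - a) (w v • (h v - a))) := hg.const_inner (P - a)
  have hinv : ∫ v, inner ℝ (P - a) (w v • (h v - a)) = ‖P - a‖ ^ 2 := by
    rw [integral_inner hg, hq, real_inner_self_eq_norm_sq]
  have e2 : (fun v => ‖h v - P‖ ^ 2 * w v) = fun v =>
      ‖h v - a‖ ^ 2 * w v - 2 * inner ℝ (P - a) (w v • (h v - a)) + ‖P - a‖ ^ 2 * w v := by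
    ext v
    have : h v - P = (h v - a) - (P - a) := by ring
    rw [this, norm_sub_sq_real, inner_smul_right, real_inner_comm]; ring
  have hs1 : Integrable (fun v => ‖h v - a‖ ^ 2 * w v - 2 * inner ℝ (P - a) (w v • (h v - a))) :=
    hi.sub (hin.const_mul 2)
  rw [e2, MeasureTheory.integral_add hs1 (hw.const_mul _),
    MeasureTheory.integral_sub hi (hin.const_mul 2), MeasureTheory.integral_const_mul, MeasureTheory.integral_const_mul, hinv, hw1]
  nlinarith [sq_nonneg ‖P - a‖]

/-- **Fractional Hardy–Poincaré inequality for Lévy–Fokker–Planck equilibria**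
(Proposition 7.1 of the paper). -/
theorem fractional_hardy_poincare
    (d : ℕ) (hd : 1 ≤ d) (s α : ℝ) (hs0 : 0 < s) (hs1 : s < 1) (hα : s < α) :
    ∃ lam > (0 : ℝ), ∀ h : Vs d → ℂ,
      AEStronglyMeasurable h (volume : Measure (Vs d)) →
      Integrable (fun p : Vs d × Vs d =>
        ‖h p.1 - h p.2‖ ^ 2 * (Meq d α (2 * s - α) p.1 + Meq d α (2 * s - α) p.2) *
          ‖p.1 - p.2‖ ^ (-(d : ℝ) - 2 * s)) →
      lam * (∫ v : Vs d,
          ‖h v - Pavg d α (2 * s - α) h‖ ^ 2 * jb v ^ (-(2 * s - α)) * Meq d α (2 * s - α) v)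
        ≤ (1 / 4) * ∫ p : Vs d × Vs d,
            ‖h p.1 - h p.2‖ ^ 2 * (Meq d α (2 * s - α) p.1 + Meq d α (2 * s - α) p.2) *
              ‖p.1 - p.2‖ ^ (-(d : ℝ) - 2 * s) := by
  have hcp := integral_jb_pos d s hs0
  set β := 2 * s - α with hβ
  have hexp : -(d : ℝ) - α - β = -(d : ℝ) - 2 * s := by rw [hβ]; ring
  set c := cNorm d α β with hc
  have hcI : c = (∫ v : Vs d, jb v ^ (-(d : ℝ) - 2 * s))⁻¹ := by
    rw [hc, cNorm, hexp]
  have hc0 : 0 < c := by rw [hcI]; exact inv_pos.2 hcp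
  set w : Vs d → ℝ := fun v => c * jb v ^ (-(d : ℝ) - 2 * s) with hwdef
  have hw0 : ∀ v, 0 ≤ w v := fun v =>
    mul_nonneg hc0.le (Real.rpow_pos_of_pos (jb_pos v) _).le
  have hwi : Integrable w := (integrable_jb d s hs0).const_mul c
  have hw1 : ∫ v, w v = 1 := by
    rw [hwdef, MeasureTheory.integral_const_mul, hcI]; exact inv_mul_cancel₀ hcp.ne'
  have hweq : ∀ v : Vs d, jb v ^ (-β) * Meq d α β v = w v := fun v => by
    simp only [Meq, hwdef, ← hc]
    rw [mul_left_comm, ← Real.rpow_add (jb_pos v)]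
    congr 2; rw [hβ]; ring
  have hMpos : ∀ v : Vs d, 0 < Meq d α β v := fun v =>
    mul_pos hc0 (Real.rpow_pos_of_pos (jb_pos v) _)
  have hP : ∀ h : Vs d → ℂ, Pavg d α β h = ∫ u, h u * (w u : ℂ) := fun h => by
    simp only [Pavg, Mbeta, hweq]
  -- kernel lower bound
  set κ : ℝ := 2 ^ (-(d : ℝ) - α) * 2 ^ (-(d : ℝ) - 2 * s) with hκ
  have hκ0 : 0 < κ := by positivity
  have hd0 : (0 : ℝ) ≤ d := Nat.cast_nonneg d
  set B : Set (Vs d) := Metric.ball 0 1 with hB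
  have hker : ∀ v v' : Vs d, v' ∈ B → v ≠ v' →
      κ * w v ≤ (Meq d α β v + Meq d α β v') * ‖v - v'‖ ^ (-(d : ℝ) - 2 * s) := by
    intro v v' hv' hne
    have hn' : ‖v'‖ < 1 := by simpa [hB] using hv'
    have hj' : jb v' ≤ 2 := by
      unfold jb; rw [Real.sqrt_le_left (by norm_num)]; nlinarith [norm_nonneg v']
    have h1 : c * 2 ^ (-(d : ℝ) - α) ≤ Meq d α β v' :=
      mul_le_mul_of_nonneg_left
        (Real.rpow_le_rpow_of_nonpos (jb_pos v') hj' (by linarith)) hc0.le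
    have hpos : 0 < ‖v - v'‖ := norm_pos_iff.2 (sub_ne_zero.2 hne)
    have hle : ‖v - v'‖ ≤ 2 * jb v := by
      have := norm_sub_le v v'
      linarith [norm_le_jb v, one_le_jb v]
    have h2 : (2 : ℝ) ^ (-(d : ℝ) - 2 * s) * jb v ^ (-(d : ℝ) - 2 * s)
        ≤ ‖v - v'‖ ^ (-(d : ℝ) - 2 * s) := by
      rw [← Real.mul_rpow (by norm_num) (jb_pos v).le]
      exact Real.rpow_le_rpow_of_nonpos hpos hle (by linarith)
    calc κ * w v = (c * 2 ^ (-(d : ℝ) - α)) *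
          ((2 : ℝ) ^ (-(d : ℝ) - 2 * s) * jb v ^ (-(d : ℝ) - 2 * s)) := by
          rw [hκ, hwdef]; ring
      _ ≤ _ := mul_le_mul (by linarith [hMpos v]) h2
          (mul_nonneg (by positivity) (Real.rpow_pos_of_pos (jb_pos v) _).le)
          (by linarith [hMpos v, hMpos v'])
  have hBpos : 0 < volume.real B := by
    rw [hB, Measure.real]
    exact ENNReal.toReal_pos (Metric.measure_ball_pos volume _ one_pos).ne'
      measure_ball_lt_top.ne
  refine ⟨κ * volume.real B / 4, by positivity, fun h hm hF => ?_⟩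
  set F : Vs d × Vs d → ℝ := fun p =>
    ‖h p.1 - h p.2‖ ^ 2 * (Meq d α β p.1 + Meq d α β p.2) *
      ‖p.1 - p.2‖ ^ (-(d : ℝ) - 2 * s) with hFdef
  have hF0 : ∀ p, 0 ≤ F p := fun p => by
    have := hMpos p.1
    have := hMpos p.2
    simp only [hFdef]; positivity
  have hFi : Integrable F (volume.prod volume) := hF
  have hptw : ∀ v' ∈ B, ∀ v, κ * (‖h v - h v'‖ ^ 2 * w v) ≤ F (v, v') := by
    intro v' hv' v
    by_cases hne : v = v'
    · subst hne; simp [hFdef]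
    · have := mul_le_mul_of_nonneg_left (hker v v' hv' hne) (sq_nonneg ‖h v - h v'‖)
      simp only [hFdef]; nlinarith
  set V := ∫ v : Vs d, ‖h v - Pavg d α β h‖ ^ 2 * jb v ^ (-β) * Meq d α β v with hV
  have hVeq : V = ∫ v, ‖h v - ∫ u, h u * (w u : ℂ)‖ ^ 2 * w v := by
    rw [hV, hP]
    simp only [mul_assoc, hweq]
  have hsec : ∀ᵐ v' : Vs d, v' ∈ B → κ * V ≤ ∫ v, F (v, v') := by
    filter_upwards [hFi.prod_left_ae] with v' hint hv'
    have hint2 : Integrable (fun v => κ * (‖h v - h v'‖ ^ 2 * w v)) := by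
      refine hint.mono' ?_ (Eventually.of_forall fun v => ?_)
      · exact (((hm.sub aestronglyMeasurable_const).norm.pow 2).mul hwi.aestronglyMeasurable).const_mul κ
      · have := hw0 v
        rw [Real.norm_of_nonneg (by positivity)]
        exact hptw v' hv' v
    have hint3 : Integrable (fun v => ‖h v - h v'‖ ^ 2 * w v) := by
      simpa [hκ0.ne'] using hint2.const_mul κ⁻¹
    have h1 := variance_le w hw0 hwi hw1 h hm (h v') hint3
    calc κ * V ≤ κ * ∫ v, ‖h v - h v'‖ ^ 2 * w v := by
          rw [hVeq]; exact mul_le_mul_of_nonneg_left h1 hκ0.le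
      _ = ∫ v, κ * (‖h v - h v'‖ ^ 2 * w v) := (MeasureTheory.integral_const_mul _ _).symm
      _ ≤ _ := integral_mono hint2 hint (hptw v' hv')
  have hGi : Integrable (fun v' => ∫ v, F (v, v')) := hFi.integral_prod_right
  have hfin : volume B ≠ ⊤ := by rw [hB]; exact measure_ball_lt_top.ne
  have hmain : volume.real B * (κ * V) ≤ ∫ p, F p := by
    calc volume.real B * (κ * V) = ∫ v' in B, κ * V := by
          rw [setIntegral_const, smul_eq_mul]
      _ ≤ ∫ v' in B, ∫ v, F (v, v') :=
          setIntegral_mono_on_ae (integrableOn_const hfin) hGi.integrableOn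
            Metric.isOpen_ball.measurableSet hsec
      _ ≤ ∫ v', ∫ v, F (v, v') := setIntegral_le_integral hGi
            (Eventually.of_forall fun v' => integral_nonneg fun v => hF0 _)
      _ = ∫ p, F p := (integral_prod_symm F hFi).symm
  linarith

end
end

section
/- Finiteness and positivity of the fractional diffusion coefficient integral for scattering models. Let d ≥ 1, ν₀ > 0, β ∈ ℝ, α ∈ (0, 2+β) with α + β > 0, and σ ∈ S^{d−1}. Then the integral ∫_{ℝ^d} [ν₀ |u|^β (u·σ)² / (ν₀² + |u|^{2β} (u·σ)²)] |u|^{−d−α} du is finite and strictly positive. -/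
open MeasureTheory Real Filter Topology intervalIntegral
open scoped InnerProductSpace

noncomputable section

/-- Radial majorant. -/
def radMaj (d : ℕ) (ν₀ β α : ℝ) (r : ℝ) : ℝ :=
  if r ≤ 1 then ν₀⁻¹ * r ^ (2 + β - d - α) else ν₀ * r ^ (-β - d - α)

lemma radMaj_integrable (d : ℕ) (hd : 1 ≤ d) (ν₀ β α : ℝ)
    (hα2 : α < 2 + β) (hαβ : 0 < α + β) :
    Integrable (fun u : Vs d => radMaj d ν₀ β α ‖u‖) (volume : Measure (Vs d)) := by
  haveI : Nonempty (Fin d) := ⟨⟨0, hd⟩⟩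
  rw [integrable_fun_norm_addHaar (volume : Measure (Vs d)) (f := radMaj d ν₀ β α)]
  rw [finrank_euclideanSpace_fin]
  have hpow : ∀ (y : ℝ), 0 < y → ∀ s : ℝ, y ^ (d - 1) * y ^ s = y ^ ((d : ℝ) - 1 + s) := by
    intro y hy s
    rw [← Real.rpow_natCast, ← Real.rpow_add hy, Nat.cast_sub hd, Nat.cast_one]
  rw [← Set.Ioc_union_Ioi_eq_Ioi (zero_le_one (α := ℝ))]
  refine IntegrableOn.union ?_ ?_
  · have h1 : IntegrableOn (fun y : ℝ => ν₀⁻¹ * y ^ (1 + β - α)) (Set.Ioc 0 1) := by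
      have := (intervalIntegral.intervalIntegrable_rpow' (a := 0) (b := 1)
        (r := 1 + β - α) (by linarith)).const_mul ν₀⁻¹
      rwa [intervalIntegrable_iff_integrableOn_Ioc_of_le zero_le_one] at this
    refine h1.congr_fun ?_ measurableSet_Ioc
    intro y hy
    simp only [radMaj, if_pos hy.2, smul_eq_mul]
    rw [mul_left_comm, hpow y hy.1]
    congr 2
    ring
  · have h1 : IntegrableOn (fun y : ℝ => ν₀ * y ^ (-1 - β - α)) (Set.Ioi 1) :=
      (integrableOn_Ioi_rpow_of_lt (by linarith) zero_lt_one).const_mul ν₀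
    refine h1.congr_fun ?_ measurableSet_Ioi
    intro y hy
    have hy' : (1 : ℝ) < y := hy
    simp only [radMaj, if_neg (not_le.mpr hy'), smul_eq_mul]
    rw [mul_left_comm, hpow y (by linarith)]
    congr 2
    ring

lemma integrand_le_radMaj (d : ℕ) (ν₀ β α : ℝ) (hν₀ : 0 < ν₀)
    (σ : Vs d) (hσ : ‖σ‖ = 1) (u : Vs d) :
    ν₀ * ‖u‖ ^ β * ⟪u, σ⟫_ℝ ^ 2 / (ν₀ ^ 2 + ‖u‖ ^ (2 * β) * ⟪u, σ⟫_ℝ ^ 2) *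
          ‖u‖ ^ (-(d : ℝ) - α) ≤ radMaj d ν₀ β α ‖u‖ := by
  rcases eq_or_ne u 0 with rfl | hu
  · simp only [radMaj, norm_zero, zero_le_one, if_true, inner_zero_left]
    have : (0:ℝ) ≤ 0 ^ (2 + β - d - α) := Real.rpow_nonneg le_rfl _
    simp only [ne_eq, OfNat.ofNat_ne_zero, not_false_eq_true, zero_pow, mul_zero, zero_div, zero_mul]
    positivity
  have hr : 0 < ‖u‖ := norm_pos_iff.mpr hu
  have hin : ⟪u, σ⟫_ℝ ^ 2 ≤ ‖u‖ ^ 2 := by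
    have := abs_real_inner_le_norm u σ
    rw [hσ, mul_one] at this
    exact sq_le_sq' (by linarith [neg_abs_le ⟪u, σ⟫_ℝ]) ((le_abs_self _).trans this)
  have hq : 0 ≤ ⟪u, σ⟫_ℝ ^ 2 := sq_nonneg _
  generalize ⟪u, σ⟫_ℝ ^ 2 = q at hin hq ⊢
  generalize ‖u‖ = r at hr hin ⊢
  have hb : 0 < r ^ β := Real.rpow_pos_of_pos hr _
  have h2b : r ^ (2 * β) = r ^ β * r ^ β := by rw [← Real.rpow_add hr]; congr 1; ring
  rw [h2b]
  have hD : 0 < ν₀ ^ 2 + r ^ β * r ^ β * q := by positivity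
  unfold radMaj
  split_ifs
  · have e : ν₀⁻¹ * r ^ (2 + β - d - α) = (ν₀⁻¹ * (r ^ β * r ^ 2)) * r ^ (-(d : ℝ) - α) := by
      rw [← Real.rpow_natCast r 2, ← Real.rpow_add hr, mul_assoc, ← Real.rpow_add hr]
      congr 2
      push_cast
      ring
    rw [e]
    refine mul_le_mul_of_nonneg_right ?_ (Real.rpow_nonneg hr.le _)
    rw [div_le_iff₀ hD]
    calc ν₀ * r ^ β * q ≤ ν₀ * r ^ β * r ^ 2 := by gcongr
      _ = ν₀⁻¹ * (r ^ β * r ^ 2) * (ν₀ ^ 2 + 0) := by field_simp; ring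
      _ ≤ _ := by gcongr; positivity
  · have e : ν₀ * r ^ (-β - d - α) = (ν₀ * (r ^ β)⁻¹) * r ^ (-(d : ℝ) - α) := by
      rw [← Real.rpow_neg hr.le, mul_assoc, ← Real.rpow_add hr]
      congr 2
      ring
    rw [e]
    refine mul_le_mul_of_nonneg_right ?_ (Real.rpow_nonneg hr.le _)
    rw [div_le_iff₀ hD]
    calc ν₀ * r ^ β * q = ν₀ * (r ^ β)⁻¹ * (0 + r ^ β * r ^ β * q) := by field_simp; ring
      _ ≤ _ := by gcongr; positivity

/-- **Finiteness and positivity of the fractional diffusion coefficient integral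
for scattering models** (Corollary 1.11 of the paper, case `α ∈ (0, 2+β)`). -/
theorem fractional_diffusion_integral_scattering
    (d : ℕ) (hd : 1 ≤ d) (ν₀ β α : ℝ) (hν₀ : 0 < ν₀)
    (hα0 : 0 < α) (hα2 : α < 2 + β) (hαβ : 0 < α + β)
    (σ : Vs d) (hσ : ‖σ‖ = 1) :
    Integrable (fun u : Vs d =>
        ν₀ * ‖u‖ ^ β * ⟪u, σ⟫_ℝ ^ 2 / (ν₀ ^ 2 + ‖u‖ ^ (2 * β) * ⟪u, σ⟫_ℝ ^ 2) *
          ‖u‖ ^ (-(d : ℝ) - α))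
      (volume : Measure (Vs d)) ∧
    0 < ∫ u : Vs d,
        ν₀ * ‖u‖ ^ β * ⟪u, σ⟫_ℝ ^ 2 / (ν₀ ^ 2 + ‖u‖ ^ (2 * β) * ⟪u, σ⟫_ℝ ^ 2) *
          ‖u‖ ^ (-(d : ℝ) - α) := by
  have hnn : ∀ u : Vs d, 0 ≤ ν₀ * ‖u‖ ^ β * ⟪u, σ⟫_ℝ ^ 2 /
      (ν₀ ^ 2 + ‖u‖ ^ (2 * β) * ⟪u, σ⟫_ℝ ^ 2) * ‖u‖ ^ (-(d : ℝ) - α) := by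
    intro u
    positivity
  have hint : Integrable (fun u : Vs d =>
        ν₀ * ‖u‖ ^ β * ⟪u, σ⟫_ℝ ^ 2 / (ν₀ ^ 2 + ‖u‖ ^ (2 * β) * ⟪u, σ⟫_ℝ ^ 2) *
          ‖u‖ ^ (-(d : ℝ) - α))
      (volume : Measure (Vs d)) := by
    refine (radMaj_integrable d hd ν₀ β α hα2 hαβ).mono' ?_ (Eventually.of_forall fun u => ?_)
    · exact Measurable.aestronglyMeasurable (by fun_prop)
    · rw [Real.norm_of_nonneg (hnn u)]
      exact integrand_le_radMaj d ν₀ β α hν₀ σ hσ u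
  refine ⟨hint, ?_⟩
  rw [integral_pos_iff_support_of_nonneg hnn hint]
  have hopen : IsOpen {u : Vs d | ⟪u, σ⟫_ℝ ≠ 0} :=
    isOpen_ne_fun (by fun_prop) continuous_const
  refine lt_of_lt_of_le (hopen.measure_pos volume ⟨σ, ?_⟩) (measure_mono ?_)
  · simp [hσ]
  · intro u hu
    have hu' : ⟪u, σ⟫_ℝ ≠ 0 := hu
    have hu0 : u ≠ 0 := by
      rintro rfl
      simp at hu'
    have hr : 0 < ‖u‖ := norm_pos_iff.mpr hu0
    rw [Function.mem_support]
    positivity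


end
end

section
/- Finiteness and positivity of the rescaled mass for scattering models with infinite-mass equilibria. Let d ≥ 1, β > 0, α ∈ (−β, 0), ν₀ > 0, and σ ∈ S^{d−1}. Then the integral ∫_{ℝ^d} [ν₀² / (ν₀² + |u|^{2β} (u·σ)²)] |u|^{−d−α} du is finite and strictly positive. -/
open MeasureTheory Real Filter Topology intervalIntegral
open scoped InnerProductSpace

noncomputable section

/-- One-dimensional weight. -/
lemma aux_integrable_line (s q : ℝ) (hs0 : 0 < s) (hs1 : s < 1) (hq : 1 < s + q) :
    Integrable (fun x : ℝ => |x| ^ (-s) * (1 + |x|) ^ (-q)) := by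
  have hq0 : 0 < q := by linarith
  have hm : AEStronglyMeasurable (fun x : ℝ => |x| ^ (-s) * (1 + |x|) ^ (-q)) volume := by
    apply Measurable.aestronglyMeasurable
    fun_prop
  have h1 : IntegrableOn (fun x : ℝ => |x| ^ (-s) * (1 + |x|) ^ (-q)) (Metric.ball 0 1) := by
    refine integrableOn_ball_of_norm_le_rpow (C := 1) (α := s) (by simp) (by simpa using hs1)
      (ae_of_all _ fun x => ?_) hm
    rw [Real.norm_of_nonneg (by positivity), one_mul, Real.norm_eq_abs]
    apply mul_le_of_le_one_right (by positivity)
    exact Real.rpow_le_one_of_one_le_of_nonpos (by linarith [abs_nonneg x]) (by linarith)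
  have h2 : IntegrableOn (fun x : ℝ => |x| ^ (-s) * (1 + |x|) ^ (-q)) (Metric.ball 0 1)ᶜ := by
    have h3 : Integrable (fun x : ℝ => 2 ^ s * (1 + ‖x‖) ^ (-(s + q))) :=
      (integrable_one_add_norm (by simpa using hq)).const_mul _
    refine Integrable.mono' h3.integrableOn hm.restrict ?_
    refine (ae_restrict_iff' measurableSet_ball.compl).2 (ae_of_all _ fun x hx => ?_)
    have hx1 : 1 ≤ |x| := by simpa using hx
    rw [Real.norm_of_nonneg (by positivity), Real.norm_eq_abs, neg_add,
      Real.rpow_add (by positivity), ← mul_assoc]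
    gcongr
    have : (2 * |x|) ^ (-s) ≤ (1 + |x|) ^ (-s) :=
      Real.rpow_le_rpow_of_nonpos (by positivity) (by linarith) (by linarith)
    rw [Real.mul_rpow (by norm_num) (by positivity)] at this
    calc |x| ^ (-s) = 2 ^ s * (2 ^ (-s) * |x| ^ (-s)) := by
          rw [← mul_assoc, ← Real.rpow_add (by norm_num)]; simp
      _ ≤ _ := by gcongr
  have := h1.union h2
  rwa [Set.union_compl_self, integrableOn_univ] at this

lemma aux_scalar (t s : ℝ) (ht : 0 < t) (hs0 : 0 < s) (hs1 : s < 1) :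
    1 / (1 + t ^ 2) ≤ t ^ (-s) := by
  rw [Real.rpow_neg ht.le, one_div]
  apply inv_anti₀ (by positivity)
  rcases le_total t 1 with h | h
  · have := Real.rpow_le_one ht.le h hs0.le
    nlinarith [sq_nonneg t]
  · have := Real.rpow_le_rpow_of_exponent_le h (show s ≤ 2 by linarith)
    rw [Real.rpow_two] at this
    linarith

lemma aux_bound (ν₀ β s α D r c : ℝ) (hν : 0 < ν₀) (hr : 0 < r) (hc : 0 < c)
    (hs0 : 0 < s) (hs1 : s < 1) :
    ν₀ ^ 2 / (ν₀ ^ 2 + r ^ (2 * β) * c ^ 2) * r ^ (-D - α)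
      ≤ ν₀ ^ s * c ^ (-s) * r ^ (-(D + α + s * β)) := by
  have hrb : 0 < r ^ β := by positivity
  have h := aux_scalar (r ^ β * c / ν₀) s (by positivity) hs0 hs1
  have e1 : ν₀ ^ 2 / (ν₀ ^ 2 + r ^ (2 * β) * c ^ 2) = 1 / (1 + (r ^ β * c / ν₀) ^ 2) := by
    rw [mul_comm 2 β, Real.rpow_mul hr.le, Real.rpow_two]
    field_simp
  have e2 : (r ^ β * c / ν₀) ^ (-s) = ν₀ ^ s * c ^ (-s) * r ^ (-(s * β)) := by
    rw [Real.div_rpow (by positivity) hν.le, Real.mul_rpow hrb.le hc.le, ← Real.rpow_mul hr.le,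
      Real.rpow_neg hν.le, div_inv_eq_mul]
    rw [show β * -s = -(s * β) by ring]
    ring
  rw [e1]
  rw [e2] at h
  calc _ ≤ ν₀ ^ s * c ^ (-s) * r ^ (-(s * β)) * r ^ (-D - α) := by gcongr
    _ = _ := by
      rw [mul_assoc, ← Real.rpow_add hr]; congr 2; ring

lemma aux_integrable (d : ℕ) (hd : 1 ≤ d) (β α ν₀ : ℝ) (hβ : 0 < β)
    (hα1 : -β < α) (hα2 : α < 0) (hν₀ : 0 < ν₀)
    (σ : Vs d) (hσ : ‖σ‖ = 1) :
    Integrable (fun u : Vs d =>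
        ν₀ ^ 2 / (ν₀ ^ 2 + ‖u‖ ^ (2 * β) * ⟪u, σ⟫_ℝ ^ 2) * ‖u‖ ^ (-(d : ℝ) - α))
      (volume : Measure (Vs d)) := by
  set F : Vs d → ℝ := fun u =>
    ν₀ ^ 2 / (ν₀ ^ 2 + ‖u‖ ^ (2 * β) * ⟪u, σ⟫_ℝ ^ 2) * ‖u‖ ^ (-(d : ℝ) - α) with hF
  have hFnn : ∀ u, 0 ≤ F u := fun u => by simp only [hF]; positivity
  have hm : AEStronglyMeasurable F volume := by
    apply Measurable.aestronglyMeasurable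
    simp only [hF]
    fun_prop
  have hd0 : (0 : ℝ) < d := by exact_mod_cast hd
  -- inside the unit ball
  have h1 : IntegrableOn F (Metric.ball 0 1) := by
    refine integrableOn_ball_of_norm_le_rpow (C := 1) (α := d + α) (by simpa using hd)
      (by simpa using hα2) (ae_of_all _ fun u => ?_) hm
    rw [Real.norm_of_nonneg (hFnn u), one_mul, neg_add']
    apply mul_le_of_le_one_left (by positivity)
    apply div_le_one_of_le₀ _ (by positivity)
    have : 0 ≤ ‖u‖ ^ (2 * β) * ⟪u, σ⟫_ℝ ^ 2 := by positivity
    linarith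
  -- choice of exponents
  obtain ⟨s, hsl, hs1⟩ : ∃ s, -α / (1 + β) < s ∧ s < 1 := by
    apply exists_between
    rw [div_lt_one (by linarith)]
    linarith
  have hs0 : 0 < s := lt_trans (by apply div_pos <;> linarith) hsl
  have hε : 0 < α + s * (1 + β) := by
    rw [div_lt_iff₀ (by linarith)] at hsl
    linarith
  set δ : ℝ := (α + s * (1 + β)) / d with hδ
  have hδ0 : 0 < δ := by positivity
  let i0 : Fin d := ⟨0, hd⟩
  obtain ⟨b, hb⟩ : ∃ b : OrthonormalBasis (Fin d) ℝ (Vs d), b i0 = σ := by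
    have ho : Orthonormal ℝ (Set.domRestrict ({i0} : Set (Fin d)) (fun _ => σ)) := by
      refine ⟨fun i => by simpa using hσ, fun i j hij => ?_⟩
      exact absurd (Subsingleton.elim i j) hij
    obtain ⟨b, hb⟩ := ho.exists_orthonormalBasis_extension_of_card_eq (by simp)
    exact ⟨b, hb i0 rfl⟩
  let q : Fin d → ℝ := fun i => 1 + δ - (if i = i0 then s else 0)
  have hq0 : ∀ i, 0 < q i := fun i => by
    simp only [q]; split_ifs <;> linarith
  have hqs : ∑ i, q i = d + α + s * β := by
    simp only [q, Finset.sum_sub_distrib, Finset.sum_const, Finset.sum_ite_eq', Finset.mem_univ,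
      if_true, Finset.card_univ, Fintype.card_fin, nsmul_eq_mul, hδ]
    field_simp
    ring
  let g : Fin d → ℝ → ℝ := fun i x => (if i = i0 then |x| ^ (-s) else 1) * (1 + |x|) ^ (-q i)
  have hg : ∀ i, Integrable (g i) := fun i => by
    by_cases hi : i = i0
    · simp only [g, q, hi, if_true]
      exact aux_integrable_line s _ hs0 hs1 (by linarith)
    · simp only [g, q, hi, if_false, one_mul]
      exact integrable_one_add_norm (E := ℝ) (by simpa using hδ0)
  have hG : Integrable (fun x : Fin d → ℝ => ∏ i, g i (x i)) := Integrable.fintype_prod hg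
  have hG' : Integrable (fun u : Vs d => ∏ i, g i (b.repr u i)) := by
    have hT := (PiLp.volume_preserving_ofLp (Fin d)).comp b.measurePreserving_repr
    exact hT.integrable_comp_of_integrable hG
  -- hyperplane
  have hhyp : ∀ᵐ u : Vs d, ⟪u, σ⟫_ℝ ≠ 0 := by
    have h0 : (volume : Measure (Vs d)) ((ℝ ∙ σ)ᗮ : Submodule ℝ (Vs d)) = 0 := by
      apply Measure.addHaar_submodule
      intro h
      have : σ ∈ (ℝ ∙ σ)ᗮ := by rw [h]; trivial
      rw [Submodule.mem_orthogonal_singleton_iff_inner_right, real_inner_self_eq_norm_sq, hσ]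
        at this
      norm_num at this
    refine measure_mono_null (fun u hu => ?_) h0
    simp only [ne_eq, Set.mem_compl_iff, Set.mem_ofPred_eq, not_not] at hu
    exact Submodule.mem_orthogonal_singleton_iff_inner_left.2 hu
  have h2 : IntegrableOn F (Metric.ball 0 1)ᶜ := by
    have h3 := hG'.const_mul (ν₀ ^ s * 2 ^ (d + α + s * β))
    refine Integrable.mono' h3.integrableOn hm.restrict ?_
    refine (ae_restrict_iff' measurableSet_ball.compl).2 ?_
    filter_upwards [hhyp] with u hu hub
    have hu1 : 1 ≤ ‖u‖ := by simpa using hub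
    have hu0 : 0 < ‖u‖ := by linarith
    rw [Real.norm_of_nonneg (hFnn u)]
    have hB := aux_bound ν₀ β s α d ‖u‖ |⟪u, σ⟫_ℝ| hν₀ hu0 (abs_pos.2 hu) hs0 hs1
    rw [sq_abs] at hB
    refine hB.trans ?_
    have hprod : ∏ i, g i (b.repr u i)
        = |⟪u, σ⟫_ℝ| ^ (-s) * ∏ i, (1 + |b.repr u i|) ^ (-q i) := by
      simp only [g, Finset.prod_mul_distrib, Finset.prod_ite_eq', Finset.mem_univ, if_true]
      rw [b.repr_apply_apply, hb, real_inner_comm]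
    rw [hprod]
    have hle : (2 * ‖u‖) ^ (-(d + α + s * β)) ≤ ∏ i, (1 + |b.repr u i|) ^ (-q i) := by
      rw [← hqs, ← Finset.sum_neg_distrib, Real.rpow_sum_of_pos (by positivity)]
      refine Finset.prod_le_prod (fun i _ => by positivity) fun i _ => ?_
      apply Real.rpow_le_rpow_of_nonpos (by positivity) _ (by linarith [hq0 i])
      have : |b.repr u i| ≤ ‖u‖ := by
        rw [b.repr_apply_apply]
        have := abs_real_inner_le_norm (b i) u
        rwa [b.orthonormal.1 i, one_mul] at this
      linarith
    rw [Real.mul_rpow (by norm_num) hu0.le] at hle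
    calc _ = ν₀ ^ s * 2 ^ (d + α + s * β) * (|⟪u, σ⟫_ℝ| ^ (-s) *
          (2 ^ (-(d + α + s * β)) * ‖u‖ ^ (-(d + α + s * β)))) := by
          rw [Real.rpow_neg (by norm_num : (0:ℝ) ≤ 2)]
          have : (0:ℝ) < 2 ^ (d + α + s * β) := by positivity
          field_simp
      _ ≤ _ := by gcongr
  have := h1.union h2
  rwa [Set.union_compl_self, integrableOn_univ] at this

/-- **Finiteness and positivity of the rescaled mass for scattering models with
infinite-mass equilibria** (Remark in Section 5 of the paper, case `α ∈ (-β, 0)`). -/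
theorem rescaled_mass_scattering_infinite_mass
    (d : ℕ) (hd : 1 ≤ d) (β α ν₀ : ℝ) (hβ : 0 < β)
    (hα1 : -β < α) (hα2 : α < 0) (hν₀ : 0 < ν₀)
    (σ : Vs d) (hσ : ‖σ‖ = 1) :
    Integrable (fun u : Vs d =>
        ν₀ ^ 2 / (ν₀ ^ 2 + ‖u‖ ^ (2 * β) * ⟪u, σ⟫_ℝ ^ 2) * ‖u‖ ^ (-(d : ℝ) - α))
      (volume : Measure (Vs d)) ∧
    0 < ∫ u : Vs d,
        ν₀ ^ 2 / (ν₀ ^ 2 + ‖u‖ ^ (2 * β) * ⟪u, σ⟫_ℝ ^ 2) * ‖u‖ ^ (-(d : ℝ) - α) := by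
  have hI := aux_integrable d hd β α ν₀ hβ hα1 hα2 hν₀ σ hσ
  refine ⟨hI, ?_⟩
  rw [integral_pos_iff_support_of_nonneg (fun u => by positivity) hI]
  have hpos : 0 < (volume : Measure (Vs d)) ({0}ᶜ : Set (Vs d)) := by
    refine IsOpen.measure_pos volume isOpen_compl_singleton ?_
    refine ⟨σ, fun h => ?_⟩
    rw [Set.mem_singleton_iff.1 h, norm_zero] at hσ
    norm_num at hσ
  refine hpos.trans_le (measure_mono fun u hu => ?_)
  have hu0 : 0 < ‖u‖ := norm_pos_iff.2 hu
  rw [Function.mem_support]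
  positivity

end
end

section
/- Gain of polynomial decay for the rescaled Fokker–Planck resolvent equation. Let d ≥ 1, α ∈ [0,4], β = 2, σ ∈ S^{d−1}, η ∈ (0,1], and write |u|_η := (η^{2/3} + |u|²)^{1/2} and ⌊u⌉ := (1+|u|²)^{1/2}. There exists 𝔤 > 0 (depending only on d) such that for every q ≥ −2 and all C² functions H, G : ℝ^d → ℂ with ∫ |H(u)|² ⌊u⌉^{q−d−α} du < ∞ and ∫ |G(u)|² ⌊u⌉^{q−d−α} du < ∞, satisfying −|u|_η² Δ_u H + (d+α) u·∇_u H − i(u·σ)|u|_η² H = G on ℝ^d, one has ∫_{ℝ^d} |H(u)|² ⌊u⌉^{q+𝔤−d−α} du ≲_{q,d,α} ∫_{ℝ^d} |G(u)|² ⌊u⌉^{q−d−α} du + ∫_{ℝ^d} |H(u)|² ⌊u⌉^{q−d−α} du, with a constant independent of η ∈ (0,1]. -/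
open MeasureTheory Real Filter Topology intervalIntegral
open scoped InnerProductSpace

noncomputable section

lemma fp_coef_bound (w c κ p N J : ℝ) (hw0 : 0 ≤ w) (hwJ : w ≤ J) (hJ : 1 ≤ J)
    (hc0 : 0 ≤ c) (hc1 : c ≤ 1) (hκ : 0 ≤ κ) (hcκ : c * κ * J ≤ 2 * c) (hN : 0 ≤ N) :
    |2 * c ^ 2 - 4 * w * c * κ + w * c ^ 2 * p / J + c ^ 2 * N| ≤ c * (10 + |p| + N) := by
  have h1 : c ^ 2 ≤ c := by nlinarith
  have h2 : w * c * κ ≤ 2 * c := by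
    have : w * (c * κ) ≤ J * (c * κ) := mul_le_mul_of_nonneg_right hwJ (by positivity)
    nlinarith
  have h2' : 0 ≤ w * c * κ := by positivity
  have hr : w / J ≤ 1 := (div_le_one (by linarith)).2 hwJ
  have hr0 : 0 ≤ w / J := by positivity
  have h3 : |w * c ^ 2 * p / J| ≤ c * |p| := by
    have : w * c ^ 2 * p / J = (w / J) * c ^ 2 * p := by ring
    rw [this, abs_mul, abs_of_nonneg (by positivity : 0 ≤ w / J * c ^ 2)]
    have : w / J * c ^ 2 ≤ c := by nlinarith [sq_nonneg c]
    exact mul_le_mul_of_nonneg_right this (abs_nonneg p)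
  have h4 : c ^ 2 * N ≤ c * N := mul_le_mul_of_nonneg_right h1 hN
  have h4' : 0 ≤ c ^ 2 * N := by positivity
  have h5 := abs_le.1 h3
  rw [abs_le]
  constructor <;> nlinarith [sq_nonneg c]

lemma fp_young (A B c K h e : ℝ) (hA : |A| ≤ c * K) (hB : |B| ≤ h * e) (hc : 0 ≤ c) (hK : 0 ≤ K) :
    |A * B| ≤ c ^ 2 * e ^ 2 / 2 + K ^ 2 * h ^ 2 / 2 := by
  rw [abs_mul]
  have : |A| * |B| ≤ (c * K) * (h * e) := mul_le_mul hA hB (abs_nonneg _) (by positivity)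
  nlinarith [sq_nonneg (c * e - K * h)]

lemma fp_re_bound (H E : ℂ) : |((starRingEnd ℂ) H * E).re| ≤ ‖H‖ * ‖E‖ := by
  have := Complex.abs_re_le_norm ((starRingEnd ℂ) H * E)
  simpa using this
lemma fp_im_bound (H E : ℂ) : |((starRingEnd ℂ) H * E).im| ≤ ‖H‖ * ‖E‖ := by
  have := Complex.abs_im_le_norm ((starRingEnd ℂ) H * E)
  simpa using this

lemma fp_s1 (s t w j τ : ℝ) (hw : w = τ + t) (hτ : 0 < τ) (hs : s ^ 2 ≤ t) (hj : 1 ≤ j) (hjt : j ^ 2 = 1 + t) :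
    s ^ 2 ≤ s ^ 2 * w / j ^ 2 + 1 := by
  have hj0 : 0 < j := by linarith
  rw [div_add_one (by positivity), le_div_iff₀ (by positivity), hjt, hw]
  nlinarith [sq_nonneg s, mul_nonneg (sq_nonneg s) hτ.le]

lemma fp_s2 (s t w j τ : ℝ) (hw : w = τ + t) (hτ : 0 < τ) (hs : s ^ 2 ≤ t) (hjt : j ^ 2 = 1 + t) :
    j ^ 2 * s ^ 2 / w ≤ s ^ 2 + 1 := by
  have hw0 : 0 < w := by nlinarith [sq_nonneg s]
  rw [div_le_iff₀ hw0, hjt, hw]; nlinarith [sq_nonneg s, mul_nonneg (sq_nonneg s) hτ.le]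

lemma fp_s3 (w f j s h : ℝ) (hw0 : 0 < w) : 2 * (j * |s| * (h * f)) ≤ w * f ^ 2 + j ^ 2 * s ^ 2 / w * h ^ 2 := by
  have e2 : j ^ 2 * s ^ 2 / w * h ^ 2 = (j * |s| * h) ^ 2 / w := by
    rw [mul_pow, mul_pow, sq_abs]; ring
  rw [e2]
  have : w * f ^ 2 + (j * |s| * h) ^ 2 / w - 2 * (j * |s| * (h * f)) = (w * f - j * |s| * h) ^ 2 / w := by
    field_simp; ring
  have : 0 ≤ (w * f - j * |s| * h) ^ 2 / w := by positivity
  linarith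

lemma fp_P3 (c κ j p : ℝ) (hj : 1 ≤ j) (hc0 : 0 ≤ c) (hc1 : c ≤ 1) (hκ : 0 ≤ κ)
    (hcκ : c * κ * j ^ 2 ≤ 2 * c) :
    |-6 * c ^ 2 * κ * j + c ^ 3 * (p + 1) / j| ≤ (13 + |p|) * c ^ 2 := by
  have hj0 : 0 < j := by linarith
  have h1 : c * κ * j ≤ 2 * c := by
    have : c * κ * j ≤ c * κ * j ^ 2 := by
      exact mul_le_mul_of_nonneg_left (by nlinarith) (mul_nonneg hc0 hκ)
    linarith
  have h1' : 0 ≤ c * κ * j := by positivity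
  have h2 : |c ^ 3 * (p + 1) / j| ≤ c ^ 2 * (|p| + 1) := by
    rw [abs_div, abs_mul, abs_of_pos hj0, abs_of_nonneg (by positivity : 0 ≤ c ^ 3)]
    refine (div_le_self (by positivity) hj).trans ?_
    have h3 : |p + 1| ≤ |p| + 1 := by simpa using abs_add_le p 1
    have : c ^ 3 ≤ c ^ 2 := by nlinarith [sq_nonneg c]
    gcongr
  have h5 : c ^ 2 * κ * j ≤ 2 * c ^ 2 := by nlinarith
  have h5' : 0 ≤ c ^ 2 * κ * j := by positivity
  have := abs_le.1 h2
  rw [abs_le]; constructor <;> nlinarith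

lemma fp_n2 (K h γ : ℝ) (hK : 400 ≤ K ^ 2) : (K ^ 2 + 2) * h ^ 2 + γ ^ 2 ≤ 2 * K ^ 2 * (h ^ 2 + γ ^ 2) := by
  nlinarith [sq_nonneg h, sq_nonneg γ, mul_nonneg (sub_nonneg.2 hK) (sq_nonneg h), mul_nonneg (sub_nonneg.2 hK) (sq_nonneg γ)]

lemma fp_n1 (K h γ : ℝ) (hK : 400 ≤ K ^ 2) : (K ^ 2 + 1) * h ^ 2 + γ ^ 2 ≤ 2 * K ^ 2 * (h ^ 2 + γ ^ 2) := by
  nlinarith [fp_n2 K h γ hK, sq_nonneg h]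

lemma fp_n3 (K h γ : ℝ) (hK : 400 ≤ K ^ 2) : h ^ 2 ≤ 2 * K ^ 2 * (h ^ 2 + γ ^ 2) := by
  nlinarith [fp_n2 K h γ hK, sq_nonneg h, sq_nonneg γ, mul_nonneg (sub_nonneg.2 hK) (sq_nonneg h)]

lemma fp_final (P K h γ X T Rb I V Z : ℝ) (hP : 0 ≤ P) (hK0 : 20 ≤ K)
    (st1 : X ≤ 2 * Rb + (K ^ 2 + 1) * h ^ 2 + γ ^ 2)
    (st2 : T ≤ -I + X + (K ^ 2 + 2) * h ^ 2 + γ ^ 2)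
    (st3 : Z ≤ V + (14 + P) * T + X + (15 + P) * h ^ 2) :
    Z ≤ ((16 + P) * K ^ 2 * 10) * (h ^ 2 + γ ^ 2) + (30 + 2 * P) * Rb - (14 + P) * I + V := by
  have m1 := mul_le_mul_of_nonneg_left st1 (by linarith : 0 ≤ 15 + P)
  have m2 := mul_le_mul_of_nonneg_left st2 (by linarith : 0 ≤ 14 + P)
  have hKK : 400 ≤ K ^ 2 := by nlinarith
  have n1 : (15 + P) * ((K ^ 2 + 1) * h ^ 2 + γ ^ 2) ≤ (16 + P) * (2 * K ^ 2 * (h ^ 2 + γ ^ 2)) := by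
    gcongr
    · linarith
    · exact fp_n1 K h γ hKK
  have n2 : (14 + P) * ((K ^ 2 + 2) * h ^ 2 + γ ^ 2) ≤ (16 + P) * (2 * K ^ 2 * (h ^ 2 + γ ^ 2)) := by
    gcongr
    · linarith
    · exact fp_n2 K h γ hKK
  have n3 : (15 + P) * h ^ 2 ≤ (16 + P) * (2 * K ^ 2 * (h ^ 2 + γ ^ 2)) := by
    gcongr
    · linarith
    · exact fp_n3 K h γ hKK
  have n4 : 0 ≤ (16 + P) * (K ^ 2 * (h ^ 2 + γ ^ 2)) := by positivity
  linarith

set_option maxHeartbeats 4000000 in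
lemma fp_real (h e f γ yE zE yS zS yG zG w τ t s c κ j p N D2 : ℝ) (hw : w = τ + t) (hτ : 0 < τ) (hτ1 : τ ≤ 1) (ht : 0 ≤ t)
    (hj : 1 ≤ j) (hjt : j ^ 2 = 1 + t) (hs : s ^ 2 ≤ t) (hc0 : 0 ≤ c) (hc1 : c ≤ 1) (hκ : 0 ≤ κ)
    (hcκ : c * κ * j ^ 2 ≤ 2 * c) (hN : 0 ≤ N) (hD : 0 ≤ D2) (hE : e ^ 2 ≤ t * D2)
    (hS : f ^ 2 ≤ D2) (hh0 : 0 ≤ h) (hf0 : 0 ≤ f) (he0 : 0 ≤ e) (hγ0 : 0 ≤ γ)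
    (bER : |yE| ≤ h * e) (bEI : |zE| ≤ h * e) (bSR : |yS| ≤ h * f) (bSI : |zS| ≤ h * f)
    (bGR : |yG| ≤ h * γ) (bGI : |zG| ≤ h * γ) :
    h ^ 2 * (c ^ 3 * j) ≤
      ((16 + |p|) * (20 + |p| + N) ^ 2 * 10) * (h ^ 2 + γ ^ 2)
      + (30 + 2 * |p|) * ((2 * c ^ 2 - 4 * w * c * κ + w * c ^ 2 * p / j ^ 2 + c ^ 2 * N) * yE
        + w * c ^ 2 * D2 - c ^ 2 * yG)
      - (14 + |p|) * ((w * c ^ 2 / j ^ 2) * zS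
        + (s / j ^ 2) * ((2 * c ^ 2 - 4 * w * c * κ + w * c ^ 2 * (p - 2) / j ^ 2 + c ^ 2 * N) * zE)
        - s / j ^ 2 * c ^ 2 * zG - s ^ 2 * w / j ^ 2 * c ^ 2 * h ^ 2)
      + ((c ^ 3 * j + s * (s * (-6 * c ^ 2 * κ * j + c ^ 3 * (p + 1) / j))) * h ^ 2
          + s * (c ^ 3 * j) * (2 * yS)) := by
  have hw0 : 0 < w := by rw [hw]; positivity
  have hwJ : w ≤ j ^ 2 := by rw [hjt]; linarith
  have hJ1 : 1 ≤ j ^ 2 := by nlinarith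
  have hj0 : 0 < j := by linarith
  set K := 20 + |p| + N with hK
  have hp0 := abs_nonneg p
  have hK0 : 20 ≤ K := by linarith
  have hewD : e ^ 2 ≤ w * D2 := by nlinarith
  have hc2 : c ^ 2 ≤ 1 := by nlinarith
  set X := w * c ^ 2 * D2 with hX
  have hX0 : 0 ≤ X := by positivity
  have hceX : c ^ 2 * e ^ 2 ≤ X := by nlinarith [sq_nonneg c]
  -- stage 1
  have A1 : |2 * c ^ 2 - 4 * w * c * κ + w * c ^ 2 * p / j ^ 2 + c ^ 2 * N| ≤ c * K :=
    (fp_coef_bound w c κ p N _ hw0.le hwJ hJ1 hc0 hc1 hκ hcκ hN).trans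
      (mul_le_mul_of_nonneg_left (by linarith) hc0)
  have Y1 := fp_young _ _ c K h e A1 bER hc0 (by linarith)
  have G1 : |c ^ 2 * yG| ≤ h ^ 2 / 2 + γ ^ 2 / 2 := by
    rw [abs_mul, abs_of_nonneg (sq_nonneg c)]
    nlinarith [abs_nonneg yG, sq_nonneg (h - γ)]
  have st1 : X ≤ 2 * ((2 * c ^ 2 - 4 * w * c * κ + w * c ^ 2 * p / j ^ 2 + c ^ 2 * N) * yE
        + X - c ^ 2 * yG) + (K ^ 2 + 1) * h ^ 2 + γ ^ 2 := by
    have := abs_le.1 Y1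
    have := abs_le.1 G1
    linarith
  -- stage 2
  have hsj : |s / j ^ 2| ≤ 1 := by
    rw [abs_div, abs_of_pos (by positivity : 0 < j ^ 2), div_le_one (by positivity)]
    rw [hjt]; nlinarith [sq_abs s, sq_nonneg (|s| - 1), abs_nonneg s]
  have A2 : |2 * c ^ 2 - 4 * w * c * κ + w * c ^ 2 * (p - 2) / j ^ 2 + c ^ 2 * N| ≤ c * K :=
    (fp_coef_bound w c κ (p - 2) N _ hw0.le hwJ hJ1 hc0 hc1 hκ hcκ hN).trans
      (mul_le_mul_of_nonneg_left (by
        have : |p - 2| ≤ |p| + |(2:ℝ)| := abs_sub _ _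
        rw [abs_two] at this; linarith) hc0)
  have Y2 := fp_young _ _ c K h e A2 bEI hc0 (by linarith)
  have Y2' : |(s / j ^ 2) * ((2 * c ^ 2 - 4 * w * c * κ + w * c ^ 2 * (p - 2) / j ^ 2 + c ^ 2 * N) * zE)| ≤
      X / 2 + K ^ 2 * h ^ 2 / 2 := by
    rw [abs_mul]
    refine (mul_le_of_le_one_left (abs_nonneg _) hsj).trans (Y2.trans (by linarith))
  have hwj : w / j ^ 2 ≤ 1 := (div_le_one (by positivity)).2 hwJ
  have hwj0 : 0 ≤ w / j ^ 2 := by positivity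
  have Z2 : |(w * c ^ 2 / j ^ 2) * zS| ≤ X / 2 + h ^ 2 / 2 := by
    have e1 : w * c ^ 2 / j ^ 2 = w / j ^ 2 * c ^ 2 := by ring
    rw [abs_mul, e1, abs_of_nonneg (by positivity)]
    have : w / j ^ 2 * c ^ 2 * |zS| ≤ w / j ^ 2 * c ^ 2 * (h * f) := by gcongr
    have h2 : w / j ^ 2 * c ^ 2 * (h * f) ≤ w / j ^ 2 * c ^ 2 * (h ^ 2 / 2 + f ^ 2 / 2) := by
      gcongr; nlinarith [sq_nonneg (h - f)]
    have h3 : w / j ^ 2 * c ^ 2 * (h ^ 2 / 2) ≤ h ^ 2 / 2 :=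
      mul_le_of_le_one_left (by positivity) (mul_le_one₀ hwj (sq_nonneg _) hc2)
    have h4 : w / j ^ 2 * c ^ 2 * (f ^ 2 / 2) ≤ X / 2 := by
      have : w / j ^ 2 ≤ w := div_le_self hw0.le hJ1
      calc w / j ^ 2 * c ^ 2 * (f ^ 2 / 2) ≤ w * c ^ 2 * (D2 / 2) := by gcongr
        _ = X / 2 := by rw [hX]; ring
    linarith [mul_add (w / j ^ 2 * c ^ 2) (h ^ 2 / 2) (f ^ 2 / 2)]
  have G2 : |s / j ^ 2 * c ^ 2 * zG| ≤ h ^ 2 / 2 + γ ^ 2 / 2 := by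
    rw [mul_assoc, abs_mul]
    refine (mul_le_of_le_one_left (abs_nonneg _) hsj).trans ?_
    rw [abs_mul, abs_of_nonneg (sq_nonneg c)]
    nlinarith [abs_nonneg zG, sq_nonneg (h - γ)]
  set T := s ^ 2 * w / j ^ 2 * c ^ 2 * h ^ 2 with hT
  have hT0 : 0 ≤ T := by positivity
  -- stage 3
  have hP3 := fp_P3 c κ j p hj hc0 hc1 hκ hcκ
  have hsT : s ^ 2 * c ^ 2 * h ^ 2 ≤ T + h ^ 2 := by
    have h1 := fp_s1 s t w j τ hw hτ hs hj hjt
    have : s ^ 2 * (c ^ 2 * h ^ 2) ≤ (s ^ 2 * w / j ^ 2 + 1) * (c ^ 2 * h ^ 2) := by gcongr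
    have h3 : c ^ 2 * h ^ 2 ≤ h ^ 2 := mul_le_of_le_one_left (sq_nonneg _) hc2
    have e9 : (s ^ 2 * w / j ^ 2 + 1) * (c ^ 2 * h ^ 2) = T + c ^ 2 * h ^ 2 := by rw [hT]; ring
    linarith
  have R1 : |s * (s * (-6 * c ^ 2 * κ * j + c ^ 3 * (p + 1) / j)) * h ^ 2| ≤ (13 + |p|) * (T + h ^ 2) := by
    have e1 : s * (s * (-6 * c ^ 2 * κ * j + c ^ 3 * (p + 1) / j)) * h ^ 2
      = (s ^ 2 * h ^ 2) * (-6 * c ^ 2 * κ * j + c ^ 3 * (p + 1) / j) := by ring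
    rw [e1, abs_mul, abs_of_nonneg (by positivity)]
    calc _ ≤ (s ^ 2 * h ^ 2) * ((13 + |p|) * c ^ 2) := by gcongr
      _ = (13 + |p|) * (s ^ 2 * c ^ 2 * h ^ 2) := by ring
      _ ≤ _ := by gcongr
  have R2 : |s * (c ^ 3 * j) * (2 * yS)| ≤ X + T + 2 * h ^ 2 := by
    have e1 : |s * (c ^ 3 * j) * (2 * yS)| = 2 * c ^ 3 * j * |s| * |yS| := by
      simp only [abs_mul, abs_of_pos hj0, abs_of_nonneg (by positivity : 0 ≤ c ^ 3), abs_two]; ring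
    rw [e1]
    have h1 : 2 * c ^ 3 * j * |s| * |yS| ≤ 2 * c ^ 2 * j * |s| * (h * f) := by
      have : c ^ 3 ≤ c ^ 2 := by nlinarith [sq_nonneg c]
      gcongr
    have h2 := fp_s3 w f j s h hw0
    have h3 : j ^ 2 * s ^ 2 / w ≤ s ^ 2 * w / j ^ 2 + 2 := by
      have h4 := fp_s2 s t w j τ hw hτ hs hjt
      have h1 := fp_s1 s t w j τ hw hτ hs hj hjt
      linarith
    have h5 : c ^ 2 * (w * f ^ 2) ≤ X := by
      rw [hX]; calc _ ≤ c ^ 2 * (w * D2) := by gcongr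
        _ = _ := by ring
    have h6 : c ^ 2 * (j ^ 2 * s ^ 2 / w * h ^ 2) ≤ T + 2 * h ^ 2 := by
      calc _ ≤ c ^ 2 * ((s ^ 2 * w / j ^ 2 + 2) * h ^ 2) := by gcongr
        _ = T + c ^ 2 * (2 * h ^ 2) := by rw [hT]; ring
        _ ≤ _ := by
          have : c ^ 2 * (2 * h ^ 2) ≤ 2 * h ^ 2 := mul_le_of_le_one_left (by positivity) hc2
          linarith
    have := mul_le_mul_of_nonneg_left h2 (sq_nonneg c)
    linarith
  set Rb := (2 * c ^ 2 - 4 * w * c * κ + w * c ^ 2 * p / j ^ 2 + c ^ 2 * N) * yE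
        + X - c ^ 2 * yG with hRb
  set U1 := (w * c ^ 2 / j ^ 2) * zS
  set U2 := (s / j ^ 2) * ((2 * c ^ 2 - 4 * w * c * κ + w * c ^ 2 * (p - 2) / j ^ 2 + c ^ 2 * N) * zE)
  set U3 := s / j ^ 2 * c ^ 2 * zG
  set V1 := s * (s * (-6 * c ^ 2 * κ * j + c ^ 3 * (p + 1) / j)) * h ^ 2 with hV1
  set V2 := s * (c ^ 3 * j) * (2 * yS)
  have st2 : T ≤ -(U1 + U2 - U3 - T) + X + (K ^ 2 + 2) * h ^ 2 + γ ^ 2 := by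
    have := abs_le.1 Y2'
    have := abs_le.1 Z2
    have := abs_le.1 G2
    have : 0 ≤ K ^ 2 * h ^ 2 := by positivity
    have : 0 ≤ h ^ 2 := by positivity
    have : 0 ≤ γ ^ 2 := by positivity
    linarith
  have st3 : h ^ 2 * (c ^ 3 * j) ≤ (c ^ 3 * j * h ^ 2 + V1 + V2) + (14 + |p|) * T + X + (15 + |p|) * h ^ 2 := by
    have := abs_le.1 R1
    have := abs_le.1 R2
    linarith
  have e5 : (c ^ 3 * j + s * (s * (-6 * c ^ 2 * κ * j + c ^ 3 * (p + 1) / j))) * h ^ 2 = c ^ 3 * j * h ^ 2 + V1 := by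
    rw [hV1]; ring
  rw [e5]
  have fin := fp_final |p| K h γ X T Rb (U1 + U2 - U3 - T) (c ^ 3 * j * h ^ 2 + V1 + V2) _ hp0 hK0 st1 st2 st3
  exact fin

set_option maxHeartbeats 1000000 in
lemma fp_point (H E S G L : ℂ) (τ t s c κ j p N D2 : ℝ) (hτ : 0 < τ) (hτ1 : τ ≤ 1) (ht : 0 ≤ t)
    (hj : 1 ≤ j) (hjt : j ^ 2 = 1 + t) (hs : s ^ 2 ≤ t) (hc0 : 0 ≤ c) (hc1 : c ≤ 1) (hκ : 0 ≤ κ)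
    (hcκ : c * κ * j ^ 2 ≤ 2 * c) (hN : 0 ≤ N) (hD : 0 ≤ D2) (hE : ‖E‖ ^ 2 ≤ t * D2)
    (hS : ‖S‖ ^ 2 ≤ D2)
    (heq : -((τ + t : ℝ) : ℂ) * L + (N : ℂ) * E - Complex.I * (s : ℂ) * ((τ + t : ℝ) : ℂ) * H = G) :
    ‖H‖ ^ 2 * (c ^ 3 * j) ≤
      ((16 + |p|) * (20 + |p| + N) ^ 2 * 10) * (‖H‖ ^ 2 + ‖G‖ ^ 2)
      + (30 + 2 * |p|) * ((starRingEnd ℂ) H * (((2 * c ^ 2 - 4 * (τ + t) * c * κ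
            + (τ + t) * c ^ 2 * p / j ^ 2 : ℝ) : ℂ) * E)
          + (((τ + t) * c ^ 2 : ℝ) : ℂ) * (D2 : ℂ)
          + (((τ + t) * c ^ 2 : ℝ) : ℂ) * ((starRingEnd ℂ) H * L)).re
      - (14 + |p|) * ((starRingEnd ℂ) H * ((((τ + t) * c ^ 2 / j ^ 2 : ℝ) : ℂ) * S
            + ((s * ((2 * c ^ 2 - 4 * (τ + t) * c * κ
            + (τ + t) * c ^ 2 * (p - 2) / j ^ 2) / j ^ 2) : ℝ) : ℂ) * E)
          + ((s * ((τ + t) * c ^ 2 / j ^ 2) : ℝ) : ℂ) * (D2 : ℂ)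
          + ((s * ((τ + t) * c ^ 2 / j ^ 2) : ℝ) : ℂ) * ((starRingEnd ℂ) H * L)).im
      + ((c ^ 3 * j + s * (s * (-6 * c ^ 2 * κ * j + c ^ 3 * (p + 1) / j))) * ‖H‖ ^ 2
          + s * (c ^ 3 * j) * (2 * ((starRingEnd ℂ) H * S).re)) := by
  set w := τ + t with hw
  have hw0 : 0 < w := by rw [hw]; positivity
  have hwJ : w ≤ j ^ 2 := by rw [hjt]; linarith
  have hJ1 : 1 ≤ j ^ 2 := by nlinarith
  have hj0 : 0 < j := by linarith
  set h := ‖H‖ with hh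
  have hh0 : 0 ≤ h := norm_nonneg _
  have hhsq : H.re ^ 2 + H.im ^ 2 = h ^ 2 := by
    rw [hh, ← Complex.normSq_eq_norm_sq, Complex.normSq_apply]; ring
  -- real and imaginary parts
  have hwL : (starRingEnd ℂ) H * ((w : ℂ) * L) = (starRingEnd ℂ) H * ((N : ℂ) * E - Complex.I * (s : ℂ) * (w : ℂ) * H - G) := by
    congr 1; rw [← heq]; ring
  have hre : w * ((starRingEnd ℂ) H * L).re = N * ((starRingEnd ℂ) H * E).re - ((starRingEnd ℂ) H * G).re := by
    have := congrArg Complex.re hwL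
    simp [Complex.mul_re, Complex.mul_im] at this ⊢
    linarith
  have him : w * ((starRingEnd ℂ) H * L).im = N * ((starRingEnd ℂ) H * E).im - ((starRingEnd ℂ) H * G).im
      - s * w * h ^ 2 := by
    have := congrArg Complex.im hwL
    rw [← hhsq]
    simp [Complex.mul_re, Complex.mul_im] at this ⊢
    linarith
  have eRe : ((starRingEnd ℂ) H * (((2 * c ^ 2 - 4 * w * c * κ
            + w * c ^ 2 * p / j ^ 2 : ℝ) : ℂ) * E)
          + ((w * c ^ 2 : ℝ) : ℂ) * (D2 : ℂ)
          + ((w * c ^ 2 : ℝ) : ℂ) * ((starRingEnd ℂ) H * L)).re =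
        (2 * c ^ 2 - 4 * w * c * κ + w * c ^ 2 * p / j ^ 2 + c ^ 2 * N) * ((starRingEnd ℂ) H * E).re
        + w * c ^ 2 * D2 - c ^ 2 * ((starRingEnd ℂ) H * G).re := by
    rw [mul_left_comm]
    simp only [Complex.add_re, Complex.re_ofReal_mul, Complex.ofReal_re]
    linear_combination c ^ 2 * hre
  have eIm : ((starRingEnd ℂ) H * (((w * c ^ 2 / j ^ 2 : ℝ) : ℂ) * S
            + ((s * ((2 * c ^ 2 - 4 * w * c * κ
            + w * c ^ 2 * (p - 2) / j ^ 2) / j ^ 2) : ℝ) : ℂ) * E)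
          + ((s * (w * c ^ 2 / j ^ 2) : ℝ) : ℂ) * (D2 : ℂ)
          + ((s * (w * c ^ 2 / j ^ 2) : ℝ) : ℂ) * ((starRingEnd ℂ) H * L)).im =
        (w * c ^ 2 / j ^ 2) * ((starRingEnd ℂ) H * S).im
        + (s / j ^ 2) * ((2 * c ^ 2 - 4 * w * c * κ + w * c ^ 2 * (p - 2) / j ^ 2 + c ^ 2 * N) * ((starRingEnd ℂ) H * E).im)
        - s / j ^ 2 * c ^ 2 * ((starRingEnd ℂ) H * G).im - s ^ 2 * w / j ^ 2 * c ^ 2 * h ^ 2 := by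
    rw [mul_add, mul_left_comm, mul_left_comm ((starRingEnd ℂ) H) _ E]
    simp only [Complex.add_im, Complex.im_ofReal_mul, Complex.ofReal_im]
    linear_combination s / j ^ 2 * c ^ 2 * him
  rw [eRe, eIm]
  exact fp_real _ ‖E‖ ‖S‖ ‖G‖ _ _ _ _ _ _ w τ t s c κ j p N D2 hw hτ hτ1 ht hj hjt hs hc0 hc1 hκ hcκ hN hD hE hS hh0
    (norm_nonneg _) (norm_nonneg _) (norm_nonneg _) (fp_re_bound H E) (fp_im_bound H E)
    (fp_re_bound H S) (fp_im_bound H S) (fp_re_bound H G) (fp_im_bound H G)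

lemma fp_div0 {d : ℕ} {E' : Type*} [NormedAddCommGroup E'] [NormedSpace ℝ E'] [CompleteSpace E']
    (F : Vs d → E') (hF : ContDiff ℝ 1 F) (hc : HasCompactSupport F) (v : Vs d) :
    Integrable (fun u => fderiv ℝ F u v) ∧ ∫ u, fderiv ℝ F u v = 0 := by
  have h1 : Integrable (fun u => fderiv ℝ F u v) :=
    ((hF.continuous_fderiv one_ne_zero).clm_apply continuous_const).integrable_of_hasCompactSupport
      (hc.fderiv_apply (𝕜 := ℝ) v)
  refine ⟨h1, ?_⟩
  have := integral_smul_fderiv_eq_neg_fderiv_smul_of_integrable (μ := (volume : Measure (Vs d)))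
    (f := fun _ => (1 : ℝ)) (g := F) (v := v) (by simp) (by simpa using h1)
    (by simpa using hF.continuous.integrable_of_hasCompactSupport hc)
    (fun x _ => by fun_prop) (fun x _ => (hF.differentiable one_ne_zero) x)
  simpa using this

lemma fp_cut2_deriv (x : ℝ) : HasDerivAt (fun x : ℝ => (max 0 x) ^ 2) (2 * max 0 x) x := by
  rcases lt_trichotomy x 0 with h | h | h
  · have : (fun x : ℝ => (max 0 x) ^ 2) =ᶠ[𝓝 x] fun _ => 0 := by
      filter_upwards [Iio_mem_nhds h] with y hy
      rw [Set.mem_Iio] at hy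
      simp [max_eq_left (le_of_lt hy)]
    rw [max_eq_left h.le]
    simpa using (hasDerivAt_const x (0:ℝ)).congr_of_eventuallyEq this
  · subst h
    rw [hasDerivAt_iff_isLittleO]
    have : (fun x : ℝ => x ^ 2) =o[𝓝 0] fun x => x := by
      simpa using Asymptotics.isLittleO_pow_id (𝕜 := ℝ) (n := 2) (by norm_num)
    refine Asymptotics.IsBigO.trans_isLittleO ?_ (by simpa using this)
    refine Asymptotics.IsBigO.of_bound 1 (Eventually.of_forall fun y => ?_)
    simp only [max_self, ne_eq, OfNat.ofNat_ne_zero, not_false_eq_true, zero_pow, sub_zero, mul_zero,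
      smul_zero, norm_pow, Real.norm_eq_abs, one_mul, sq_abs]
    rcases le_total 0 y with h | h
    · simp [max_eq_right h]
    · simp [max_eq_left h]; positivity
  · have : (fun x : ℝ => (max 0 x) ^ 2) =ᶠ[𝓝 x] fun x => x ^ 2 := by
      filter_upwards [Ioi_mem_nhds h] with y hy
      rw [Set.mem_Ioi] at hy
      simp only [max_eq_right (le_of_lt hy)]
    rw [max_eq_right h.le]
    simpa using (hasDerivAt_pow 2 x).congr_of_eventuallyEq this

lemma fp_cut3_deriv (x : ℝ) : HasDerivAt (fun x : ℝ => (max 0 x) ^ 3) (3 * (max 0 x) ^ 2) x := by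
  have e : (fun x : ℝ => (max 0 x) ^ 3) = fun x => x * (max 0 x) ^ 2 := by
    funext y
    rcases le_total 0 y with h | h
    · simp [max_eq_right h]; ring
    · simp [max_eq_left h]
  rw [e]
  refine ((hasDerivAt_id' x).mul (fp_cut2_deriv x)).congr_deriv ?_
  rcases le_total 0 x with h | h
  · simp [max_eq_right h]; ring
  · simp [max_eq_left h]

lemma fp_cut2_contDiff : ContDiff ℝ 1 (fun x : ℝ => (max 0 x) ^ 2) := by
  rw [contDiff_one_iff_deriv]
  refine ⟨fun x => (fp_cut2_deriv x).differentiableAt, ?_⟩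
  have : deriv (fun x : ℝ => (max 0 x) ^ 2) = fun x => 2 * max 0 x := funext fun x => (fp_cut2_deriv x).deriv
  rw [this]; fun_prop

lemma fp_cut3_contDiff : ContDiff ℝ 1 (fun x : ℝ => (max 0 x) ^ 3) := by
  rw [contDiff_one_iff_deriv]
  refine ⟨fun x => (fp_cut3_deriv x).differentiableAt, ?_⟩
  have : deriv (fun x : ℝ => (max 0 x) ^ 3) = fun x => 3 * (max 0 x) ^ 2 := funext fun x => (fp_cut3_deriv x).deriv
  rw [this]; fun_prop

/-- Cutoff at radius `κ^{-1/2}`. -/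
def fpc (κ : ℝ) {d : ℕ} (u : Vs d) : ℝ := max 0 (1 - κ * ‖u‖ ^ 2)

lemma fpc_sq_contDiff (κ : ℝ) (d : ℕ) : ContDiff ℝ 1 (fun u : Vs d => fpc κ u ^ 2) :=
  fp_cut2_contDiff.comp (contDiff_const.sub (contDiff_const.mul (contDiff_norm_sq ℝ)))
lemma fpc_cube_contDiff (κ : ℝ) (d : ℕ) : ContDiff ℝ 1 (fun u : Vs d => fpc κ u ^ 3) :=
  fp_cut3_contDiff.comp (contDiff_const.sub (contDiff_const.mul (contDiff_norm_sq ℝ)))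

lemma fpc_support (κ : ℝ) (hκ : 0 < κ) (d : ℕ) : HasCompactSupport (fun u : Vs d => fpc κ u) := by
  refine HasCompactSupport.intro (isCompact_closedBall (0 : Vs d) (1 / κ + 1)) fun u hu => ?_
  simp only [Metric.mem_closedBall, dist_zero_right, not_le] at hu
  refine max_eq_left ?_
  have h0 : 0 < 1 / κ := by positivity
  have : 1 < κ * ‖u‖ := by
    have := mul_lt_mul_of_pos_left hu hκ
    have e : κ * (1 / κ + 1) = 1 + κ := by field_simp
    linarith
  nlinarith

lemma jb_contDiff (p : ℝ) (d : ℕ) : ContDiff ℝ 1 (fun u : Vs d => jb u ^ p) := by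
  have h : ContDiff ℝ 1 (fun u : Vs d => 1 + ‖u‖ ^ 2) := contDiff_const.add (contDiff_norm_sq ℝ)
  exact (h.sqrt fun u => by positivity).rpow_const_of_ne fun u => by
    have : 0 < √(1 + ‖u‖ ^ 2) := by positivity
    exact this.ne'

lemma fp_nsq_fderiv {d : ℕ} (u : Vs d) : HasFDerivAt (fun u : Vs d => ‖u‖ ^ 2) (2 • innerSL ℝ u) u :=
  (hasStrictFDerivAt_norm_sq u).hasFDerivAt

lemma fpr_deriv (p t : ℝ) (ht : 0 ≤ t) : HasDerivAt (fun t : ℝ => √(1 + t) ^ p) (p / 2 * √(1 + t) ^ (p - 2)) t := by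
  have h0 : 0 < 1 + t := by linarith
  have hs : 0 < √(1 + t) := by positivity
  have h1 : HasDerivAt (fun t : ℝ => √(1 + t)) (1 / (2 * √(1 + t))) t :=
    ((hasDerivAt_id' t).const_add 1).sqrt h0.ne'
  convert h1.rpow_const (p := p) (Or.inl hs.ne') using 1
  have : √(1 + t) ^ (p - 1) = √(1 + t) ^ (p - 2) * √(1 + t) := by
    rw [← Real.rpow_add_one hs.ne']; ring_nf
  rw [this]; field_simp

lemma fp_rho2 (τ κ p t : ℝ) (ht : 0 ≤ t) :
    HasDerivAt (fun t : ℝ => (τ + t) * (max 0 (1 - κ * t)) ^ 2 * √(1 + t) ^ p)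
      (((max 0 (1 - κ * t)) ^ 2 - 2 * (τ + t) * max 0 (1 - κ * t) * κ) * √(1 + t) ^ p
        + (τ + t) * (max 0 (1 - κ * t)) ^ 2 * (p / 2 * √(1 + t) ^ (p - 2))) t := by
  have h1 : HasDerivAt (fun t : ℝ => 1 - κ * t) (-κ) t := by
    simpa using ((hasDerivAt_id' t).const_mul κ).const_sub 1
  have h2 := (fp_cut2_deriv (1 - κ * t)).comp t h1
  have h3 := (((hasDerivAt_id' t).const_add τ).mul h2).mul (fpr_deriv p t ht)
  refine h3.congr_deriv ?_
  simp only [Function.comp, Pi.mul_apply]; ring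

lemma fp_rho3 (κ p t : ℝ) (ht : 0 ≤ t) :
    HasDerivAt (fun t : ℝ => (max 0 (1 - κ * t)) ^ 3 * √(1 + t) ^ p)
      (-3 * (max 0 (1 - κ * t)) ^ 2 * κ * √(1 + t) ^ p
        + (max 0 (1 - κ * t)) ^ 3 * (p / 2 * √(1 + t) ^ (p - 2))) t := by
  have h1 : HasDerivAt (fun t : ℝ => 1 - κ * t) (-κ) t := by
    simpa using ((hasDerivAt_id' t).const_mul κ).const_sub 1
  have h2 := (fp_cut3_deriv (1 - κ * t)).comp t h1
  have h3 := h2.mul (fpr_deriv p t ht)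
  refine h3.congr_deriv ?_
  simp only [Function.comp, Pi.mul_apply]; ring

/-- Weight of the first two multipliers. -/
def fpW (τ κ p : ℝ) {d : ℕ} (u : Vs d) : ℝ := (τ + ‖u‖ ^ 2) * fpc κ u ^ 2 * jb u ^ p

/-- Weight of the third multiplier. -/
def fpM (κ p : ℝ) {d : ℕ} (u : Vs d) : ℝ := fpc κ u ^ 3 * jb u ^ p

lemma fpW_fderiv (τ κ p : ℝ) {d : ℕ} (u v : Vs d) :
    fderiv ℝ (fpW τ κ p) u v = ((2 * fpc κ u ^ 2 - 4 * (τ + ‖u‖ ^ 2) * fpc κ u * κ) * jb u ^ p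
        + (τ + ‖u‖ ^ 2) * fpc κ u ^ 2 * p * jb u ^ (p - 2)) * ⟪u, v⟫_ℝ := by
  have h := (fp_rho2 τ κ p (‖u‖ ^ 2) (by positivity)).comp_hasFDerivAt u (fp_nsq_fderiv u)
  have e : fpW τ κ p = (fun t : ℝ => (τ + t) * (max 0 (1 - κ * t)) ^ 2 * √(1 + t) ^ p) ∘ (fun u : Vs d => ‖u‖ ^ 2) := rfl
  rw [e, h.fderiv]
  simp only [fpc, jb, smul_apply, innerSL_apply_apply, smul_eq_mul, nsmul_eq_mul]
  push_cast; ring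

lemma fpM_fderiv (κ p : ℝ) {d : ℕ} (u v : Vs d) :
    fderiv ℝ (fpM κ p) u v = (-6 * fpc κ u ^ 2 * κ * jb u ^ p
        + fpc κ u ^ 3 * p * jb u ^ (p - 2)) * ⟪u, v⟫_ℝ := by
  have h := (fp_rho3 κ p (‖u‖ ^ 2) (by positivity)).comp_hasFDerivAt u (fp_nsq_fderiv u)
  have e : fpM κ p = (fun t : ℝ => (max 0 (1 - κ * t)) ^ 3 * √(1 + t) ^ p) ∘ (fun u : Vs d => ‖u‖ ^ 2) := rfl
  rw [e, h.fderiv]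
  simp only [fpc, jb, smul_apply, innerSL_apply_apply, smul_eq_mul, nsmul_eq_mul]
  push_cast; ring

lemma fpW_contDiff (τ κ p : ℝ) (d : ℕ) : ContDiff ℝ 1 (fpW τ κ p : Vs d → ℝ) :=
  ((contDiff_const.add (contDiff_norm_sq ℝ)).mul (fpc_sq_contDiff κ d)).mul (jb_contDiff p d)
lemma fpM_contDiff (κ p : ℝ) (d : ℕ) : ContDiff ℝ 1 (fpM κ p : Vs d → ℝ) :=
  (fpc_cube_contDiff κ d).mul (jb_contDiff p d)

lemma fpW_support (τ κ p : ℝ) (hκ : 0 < κ) (d : ℕ) : HasCompactSupport (fpW τ κ p : Vs d → ℝ) := by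
  refine (fpc_support κ hκ d).mono ?_
  intro u hu
  simp only [Function.mem_support, fpW] at hu ⊢
  intro h; exact hu (by simp [h])
lemma fpM_support (κ p : ℝ) (hκ : 0 < κ) (d : ℕ) : HasCompactSupport (fpM κ p : Vs d → ℝ) := by
  refine (fpc_support κ hκ d).mono ?_
  intro u hu
  simp only [Function.mem_support, fpM] at hu ⊢
  intro h; exact hu (by simp [h])

/-- Integration by parts, complex. -/
lemma fp_ibp {d : ℕ} (φ : Vs d → ℝ) (hφ : ContDiff ℝ 1 φ) (hφc : HasCompactSupport φ)
    (H : Vs d → ℂ) (hH : ContDiff ℝ 2 H) (B : Vs d → ℂ)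
    (hB : ∀ u, B u = (starRingEnd ℂ) (H u) * (∑ i : Fin d,
        ((fderiv ℝ φ u (EuclideanSpace.single i 1) : ℝ) : ℂ) * fderiv ℝ H u (EuclideanSpace.single i 1))
      + (φ u : ℂ) * ((∑ i : Fin d, ‖fderiv ℝ H u (EuclideanSpace.single i 1)‖ ^ 2 : ℝ) : ℂ)
      + (φ u : ℂ) * ((starRingEnd ℂ) (H u) * laplC H u)) :
    Integrable B ∧ ∫ u, B u = 0 := by
  set D : Fin d → Vs d → ℂ := fun i w => fderiv ℝ H w (EuclideanSpace.single i 1) with hD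
  have hDc : ∀ i, ContDiff ℝ 1 (D i) := fun i =>
    (hH.fderiv_right (m := 1) (by norm_num)).clm_apply contDiff_const
  have hH1 : ContDiff ℝ 1 H := hH.of_le (by norm_num)
  have hφC : ContDiff ℝ 1 (fun u => (φ u : ℂ)) := Complex.ofRealCLM.contDiff.comp hφ
  have hHc : ContDiff ℝ 1 (fun u => (starRingEnd ℂ) (H u)) := Complex.conjCLE.contDiff.comp hH1
  set F : Fin d → Vs d → ℂ := fun i u => (φ u : ℂ) * ((starRingEnd ℂ) (H u) * D i u) with hF
  have hFc : ∀ i, ContDiff ℝ 1 (F i) := fun i => hφC.mul (hHc.mul (hDc i))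
  have hFs : ∀ i, HasCompactSupport (F i) := fun i => by
    refine hφc.mono ?_
    intro u hu
    simp only [Function.mem_support, hF] at hu ⊢
    intro h; exact hu (by simp [h])
  have key := fun i => fp_div0 (F i) (hFc i) (hFs i) (EuclideanSpace.single i 1)
  have hsum : B = fun u => ∑ i : Fin d, fderiv ℝ (F i) u (EuclideanSpace.single i 1) := by
    funext u
    rw [hB, laplC, Finset.mul_sum, Finset.mul_sum, Complex.ofReal_sum, Finset.mul_sum, Finset.mul_sum,
      ← Finset.sum_add_distrib, ← Finset.sum_add_distrib]
    refine Finset.sum_congr rfl fun i _ => ?_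
    have f1 : HasFDerivAt (fun u => (φ u : ℂ)) (Complex.ofRealCLM.comp (fderiv ℝ φ u)) u :=
      Complex.ofRealCLM.hasFDerivAt.comp u (hφ.differentiable one_ne_zero u).hasFDerivAt
    have f2 : HasFDerivAt (fun u => (starRingEnd ℂ) (H u)) ((Complex.conjCLE : ℂ →L[ℝ] ℂ).comp (fderiv ℝ H u)) u :=
      (Complex.conjCLE : ℂ →L[ℝ] ℂ).hasFDerivAt.comp u (hH1.differentiable one_ne_zero u).hasFDerivAt
    have f3 := ((hDc i).differentiable one_ne_zero u).hasFDerivAt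
    have f4 := f1.mul (f2.mul f3)
    have f5 : fderiv ℝ (F i) u = _ := f4.fderiv
    rw [f5]
    have e1 : ((‖D i u‖ ^ 2 : ℝ) : ℂ) = (starRingEnd ℂ) (D i u) * D i u := by
      rw [Complex.conj_mul']; push_cast; rfl
    simp only [hD] at e1
    rw [e1]
    simp only [hD, Pi.mul_apply, add_apply, smul_apply, smul_eq_mul,
      ContinuousLinearMap.comp_apply, Complex.ofRealCLM_apply, ContinuousLinearEquiv.coe_coe, Complex.conjCLE_apply]
    ring
  rw [hsum]
  refine ⟨integrable_finsetSum _ fun i _ => (key i).1, ?_⟩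
  rw [integral_finsetSum _ fun i _ => (key i).1]
  exact Finset.sum_eq_zero fun i _ => (key i).2

lemma fp_ibp3 {d : ℕ} (φ : Vs d → ℝ) (hφ : ContDiff ℝ 1 φ) (hφc : HasCompactSupport φ)
    (H : Vs d → ℂ) (hH : ContDiff ℝ 2 H) (v : Vs d) (B : Vs d → ℝ)
    (hB : ∀ u, B u = fderiv ℝ φ u v * ‖H u‖ ^ 2
      + φ u * (2 * ((starRingEnd ℂ) (H u) * fderiv ℝ H u v).re)) :
    Integrable B ∧ ∫ u, B u = 0 := by
  have hH1 : ContDiff ℝ 1 H := hH.of_le (by norm_num)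
  have hc : HasCompactSupport (fun u => φ u * ‖H u‖ ^ 2) := hφc.mul_right
  have key := fp_div0 _ (hφ.mul (hH1.norm_sq ℝ)) hc v
  have : B = fun u => fderiv ℝ (fun u => φ u * ‖H u‖ ^ 2) u v := by
    funext u
    have f1 := ((hφ.differentiable one_ne_zero u).hasFDerivAt).mul ((hH1.differentiable one_ne_zero u).hasFDerivAt.norm_sq)
    have f2 : fderiv ℝ (fun u => φ u * ‖H u‖ ^ 2) u = _ := f1.fderiv
    rw [hB, f2]
    simp [Complex.inner]
    ring
  rw [this]; exact key

lemma fp_expand {d : ℕ} (A : Vs d →L[ℝ] ℂ) (x : Vs d) :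
    A x = ∑ i : Fin d, ((⟪x, EuclideanSpace.single i (1:ℝ)⟫_ℝ : ℝ) : ℂ) * A (EuclideanSpace.single i 1) := by
  have h := (EuclideanSpace.basisFun (Fin d) ℝ).sum_repr x
  conv_lhs => rw [← h, map_sum]
  refine Finset.sum_congr rfl fun i _ => ?_
  simp [EuclideanSpace.inner_single_right]

lemma fp_cs {d : ℕ} (A : Vs d →L[ℝ] ℂ) (x : Vs d) :
    ‖A x‖ ^ 2 ≤ ‖x‖ ^ 2 * ∑ i : Fin d, ‖A (EuclideanSpace.single i 1)‖ ^ 2 := by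
  rw [fp_expand A x]
  have h1 : ‖∑ i : Fin d, ((⟪x, EuclideanSpace.single i (1:ℝ)⟫_ℝ : ℝ) : ℂ) * A (EuclideanSpace.single i 1)‖
      ≤ ∑ i : Fin d, ‖x i‖ * ‖A (EuclideanSpace.single i 1)‖ := by
    refine (norm_sum_le _ _).trans (Finset.sum_le_sum fun i _ => ?_)
    simp [EuclideanSpace.inner_single_right]
  calc _ ≤ (∑ i : Fin d, ‖x i‖ * ‖A (EuclideanSpace.single i 1)‖) ^ 2 := by gcongr
    _ ≤ (∑ i : Fin d, ‖x i‖ ^ 2) * ∑ i : Fin d, ‖A (EuclideanSpace.single i 1)‖ ^ 2 :=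
      Finset.sum_mul_sq_le_sq_mul_sq _ _ _
    _ = _ := by rw [EuclideanSpace.norm_sq_eq]

lemma fp_jb_one {d : ℕ} (u : Vs d) : 1 ≤ jb u := by
  rw [jb, Real.one_le_sqrt]; nlinarith [sq_nonneg ‖u‖]

lemma fp_jb_sq {d : ℕ} (u : Vs d) : jb u ^ 2 = 1 + ‖u‖ ^ 2 := Real.sq_sqrt (by positivity)

lemma fp_fderiv_smul_inner {d : ℕ} (σ : Vs d) (ψ : Vs d → ℝ) (hψ : ContDiff ℝ 1 ψ) (u v : Vs d) :
    fderiv ℝ (fun u => ⟪u, σ⟫_ℝ * ψ u) u v = ⟪v, σ⟫_ℝ * ψ u + ⟪u, σ⟫_ℝ * fderiv ℝ ψ u v := by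
  have f0 : HasFDerivAt (fun u : Vs d => ⟪u, σ⟫_ℝ) (innerSL ℝ σ) u := by
    have : (fun u : Vs d => ⟪u, σ⟫_ℝ) = innerSL ℝ σ := by
      funext w; rw [innerSL_apply_apply, real_inner_comm]
    rw [this]; exact (innerSL ℝ σ).hasFDerivAt
  have f1 := f0.mul (hψ.differentiable one_ne_zero u).hasFDerivAt
  have f2 : fderiv ℝ (fun u => ⟪u, σ⟫_ℝ * ψ u) u = _ := f1.fderiv
  rw [f2]
  simp only [add_apply, smul_apply, smul_eq_mul, innerSL_apply_apply, real_inner_comm σ v]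
  ring

lemma fp_cutoff_est (d : ℕ) (α : ℝ) (hα0 : 0 ≤ α) (p κ η : ℝ) (hκ : 0 < κ) (hκ1 : κ ≤ 1)
    (τ : ℝ) (hτ : 0 < τ) (hτ1 : τ ≤ 1) (σ : Vs d) (hσ : ‖σ‖ = 1)
    (H G : Vs d → ℂ) (hH : ContDiff ℝ 2 H)
    (hI : Integrable (fun u => (‖H u‖ ^ 2 + ‖G u‖ ^ 2) * jb u ^ p))
    (heq : ∀ u : Vs d, -((τ + ‖u‖ ^ 2 : ℝ) : ℂ) * laplC H u
                + (((d : ℝ) + α : ℝ) : ℂ) * fderiv ℝ H u u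
                - Complex.I * ((⟪u, σ⟫_ℝ : ℝ) : ℂ) * ((τ + ‖u‖ ^ 2 : ℝ) : ℂ) * H u = G u) :
    Integrable (fun u => ‖H u‖ ^ 2 * fpM κ (p + 1) u) ∧
    ∫ u, ‖H u‖ ^ 2 * fpM κ (p + 1) u ≤ ((16 + |p|) * (20 + |p| + ((d : ℝ) + α)) ^ 2 * 10) *
      ∫ u, (‖H u‖ ^ 2 + ‖G u‖ ^ 2) * jb u ^ p := by
  have hI0 : Integrable (fun u => ‖H u‖ ^ 2 * fpM κ (p + 1) u) := by
    refine Continuous.integrable_of_hasCompactSupport ?_ (fpM_support κ (p + 1) hκ d).mul_left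
    exact ((hH.continuous.norm).pow 2).mul (fpM_contDiff κ (p + 1) d).continuous
  refine ⟨hI0, ?_⟩
  have hin : ContDiff ℝ 1 (fun u : Vs d => ⟪u, σ⟫_ℝ) := contDiff_id.inner ℝ contDiff_const
  obtain ⟨i1, z1⟩ := fp_ibp (fpW τ κ p) (fpW_contDiff τ κ p d) (fpW_support τ κ p hκ d) H hH _ (fun u => rfl)
  obtain ⟨i2, z2⟩ := fp_ibp (fun u => ⟪u, σ⟫_ℝ * fpW τ κ (p - 2) u) (hin.mul (fpW_contDiff τ κ (p - 2) d))
    (fpW_support τ κ (p - 2) hκ d).mul_left H hH _ (fun u => rfl)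
  obtain ⟨i3, z3⟩ := fp_ibp3 (fun u => ⟪u, σ⟫_ℝ * fpM κ (p + 1) u) (hin.mul (fpM_contDiff κ (p + 1) d))
    (fpM_support κ (p + 1) hκ d).mul_left H hH σ _ (fun u => rfl)
  set B1 : Vs d → ℂ := fun u => (starRingEnd ℂ) (H u) * (∑ i : Fin d,
        ((fderiv ℝ (fpW τ κ p) u (EuclideanSpace.single i 1) : ℝ) : ℂ) * fderiv ℝ H u (EuclideanSpace.single i 1))
      + (fpW τ κ p u : ℂ) * ((∑ i : Fin d, ‖fderiv ℝ H u (EuclideanSpace.single i 1)‖ ^ 2 : ℝ) : ℂ)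
      + (fpW τ κ p u : ℂ) * ((starRingEnd ℂ) (H u) * laplC H u) with hB1
  set B2 : Vs d → ℂ := fun u => (starRingEnd ℂ) (H u) * (∑ i : Fin d,
        ((fderiv ℝ (fun u => ⟪u, σ⟫_ℝ * fpW τ κ (p - 2) u) u (EuclideanSpace.single i 1) : ℝ) : ℂ) * fderiv ℝ H u (EuclideanSpace.single i 1))
      + ((⟪u, σ⟫_ℝ * fpW τ κ (p - 2) u : ℝ) : ℂ) * ((∑ i : Fin d, ‖fderiv ℝ H u (EuclideanSpace.single i 1)‖ ^ 2 : ℝ) : ℂ)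
      + ((⟪u, σ⟫_ℝ * fpW τ κ (p - 2) u : ℝ) : ℂ) * ((starRingEnd ℂ) (H u) * laplC H u) with hB2
  set B3 : Vs d → ℝ := fun u => fderiv ℝ (fun u => ⟪u, σ⟫_ℝ * fpM κ (p + 1) u) u σ * ‖H u‖ ^ 2
      + ⟪u, σ⟫_ℝ * fpM κ (p + 1) u * (2 * ((starRingEnd ℂ) (H u) * fderiv ℝ H u σ).re) with hB3
  set C := (16 + |p|) * (20 + |p| + ((d : ℝ) + α)) ^ 2 * 10 with hC
  have hpt : ∀ u, ‖H u‖ ^ 2 * fpM κ (p + 1) u ≤ C * ((‖H u‖ ^ 2 + ‖G u‖ ^ 2) * jb u ^ p)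
      + (30 + 2 * |p|) * (B1 u).re - (14 + |p|) * (B2 u).im + B3 u := by
    intro u
    have hj := fp_jb_one u
    have hj0 : 0 < jb u := by linarith
    have hc0 : 0 ≤ fpc κ u := le_max_left _ _
    have hc1 : fpc κ u ≤ 1 := max_le zero_le_one (by nlinarith [sq_nonneg ‖u‖])
    have hcκ : fpc κ u * κ * jb u ^ 2 ≤ 2 * fpc κ u := by
      rw [fp_jb_sq, mul_assoc, mul_comm 2]
      rcases eq_or_lt_of_le hc0 with h | h
      · rw [← h]; simp
      · refine mul_le_mul_of_nonneg_left ?_ hc0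
        have : 0 < 1 - κ * ‖u‖ ^ 2 := by
          rcases lt_max_iff.1 h with h' | h'
          · exact absurd h' (lt_irrefl _)
          · exact h'
        linarith
    have hs : ⟪u, σ⟫_ℝ ^ 2 ≤ ‖u‖ ^ 2 := by
      have := abs_real_inner_le_norm u σ
      rw [hσ, mul_one] at this
      exact sq_le_sq' (abs_le.1 this).1 (abs_le.1 this).2
    have hP := fp_point (H u) (fderiv ℝ H u u) (fderiv ℝ H u σ) (G u) (laplC H u) τ (‖u‖ ^ 2) ⟪u, σ⟫_ℝ
      (fpc κ u) κ (jb u) p ((d : ℝ) + α) (∑ i : Fin d, ‖fderiv ℝ H u (EuclideanSpace.single i 1)‖ ^ 2)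
      hτ hτ1 (by positivity) hj (fp_jb_sq u) hs hc0 hc1 hκ.le hcκ (by positivity) (by positivity)
      (fp_cs _ _) (by simpa [hσ] using fp_cs (fderiv ℝ H u) σ) (heq u)
    have ha : 0 < jb u ^ p := Real.rpow_pos_of_pos hj0 _
    have r1 : jb u ^ (p + 1) = jb u ^ p * jb u := Real.rpow_add_one hj0.ne' p
    have r2 : jb u ^ (p - 2) = jb u ^ p / jb u ^ 2 := by
      rw [Real.rpow_sub hj0, Real.rpow_two]
    have r3 : jb u ^ (p + 1 - 2) = jb u ^ p / jb u := by
      rw [show p + 1 - 2 = p - 1 by ring, Real.rpow_sub_one hj0.ne']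
    have r4 : jb u ^ (p - 2 - 2) = jb u ^ p / jb u ^ 2 / jb u ^ 2 := by
      rw [Real.rpow_sub hj0 (p - 2), Real.rpow_two, r2]
    have E1 : B1 u = ((jb u ^ p : ℝ) : ℂ) * ((starRingEnd ℂ) (H u) * (((2 * fpc κ u ^ 2 - 4 * (τ + ‖u‖ ^ 2) * fpc κ u * κ
            + (τ + ‖u‖ ^ 2) * fpc κ u ^ 2 * p / jb u ^ 2 : ℝ) : ℂ) * fderiv ℝ H u u)
          + (((τ + ‖u‖ ^ 2) * fpc κ u ^ 2 : ℝ) : ℂ) * ((∑ i : Fin d, ‖fderiv ℝ H u (EuclideanSpace.single i 1)‖ ^ 2 : ℝ) : ℂ)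
          + (((τ + ‖u‖ ^ 2) * fpc κ u ^ 2 : ℝ) : ℂ) * ((starRingEnd ℂ) (H u) * laplC H u)) := by
      have e0 : (∑ i : Fin d,
        ((fderiv ℝ (fpW τ κ p) u (EuclideanSpace.single i 1) : ℝ) : ℂ) * fderiv ℝ H u (EuclideanSpace.single i 1))
        = ((jb u ^ p * (2 * fpc κ u ^ 2 - 4 * (τ + ‖u‖ ^ 2) * fpc κ u * κ
            + (τ + ‖u‖ ^ 2) * fpc κ u ^ 2 * p / jb u ^ 2) : ℝ) : ℂ) * fderiv ℝ H u u := by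
        rw [fp_expand (fderiv ℝ H u) u, Finset.mul_sum]
        refine Finset.sum_congr rfl fun i _ => ?_
        rw [← mul_assoc, ← Complex.ofReal_mul, fpW_fderiv, r2]
        congr 2
        ring
      simp only [hB1, fpW]
      rw [e0]
      generalize ((∑ i : Fin d, ‖fderiv ℝ H u (EuclideanSpace.single i 1)‖ ^ 2 : ℝ) : ℂ) = D2
      simp only [Complex.ofReal_mul]; ring
    have E2 : B2 u = ((jb u ^ p : ℝ) : ℂ) * ((starRingEnd ℂ) (H u) * ((((τ + ‖u‖ ^ 2) * fpc κ u ^ 2 / jb u ^ 2 : ℝ) : ℂ) * fderiv ℝ H u σ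
            + ((⟪u, σ⟫_ℝ * ((2 * fpc κ u ^ 2 - 4 * (τ + ‖u‖ ^ 2) * fpc κ u * κ
            + (τ + ‖u‖ ^ 2) * fpc κ u ^ 2 * (p - 2) / jb u ^ 2) / jb u ^ 2) : ℝ) : ℂ) * fderiv ℝ H u u)
          + ((⟪u, σ⟫_ℝ * ((τ + ‖u‖ ^ 2) * fpc κ u ^ 2 / jb u ^ 2) : ℝ) : ℂ) * ((∑ i : Fin d, ‖fderiv ℝ H u (EuclideanSpace.single i 1)‖ ^ 2 : ℝ) : ℂ)
          + ((⟪u, σ⟫_ℝ * ((τ + ‖u‖ ^ 2) * fpc κ u ^ 2 / jb u ^ 2) : ℝ) : ℂ) * ((starRingEnd ℂ) (H u) * laplC H u)) := by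
      have e0 : (∑ i : Fin d,
        ((fderiv ℝ (fun u => ⟪u, σ⟫_ℝ * fpW τ κ (p - 2) u) u (EuclideanSpace.single i 1) : ℝ) : ℂ) * fderiv ℝ H u (EuclideanSpace.single i 1))
        = ((jb u ^ p * ((τ + ‖u‖ ^ 2) * fpc κ u ^ 2 / jb u ^ 2) : ℝ) : ℂ) * fderiv ℝ H u σ
          + ((jb u ^ p * (⟪u, σ⟫_ℝ * ((2 * fpc κ u ^ 2 - 4 * (τ + ‖u‖ ^ 2) * fpc κ u * κ
            + (τ + ‖u‖ ^ 2) * fpc κ u ^ 2 * (p - 2) / jb u ^ 2) / jb u ^ 2)) : ℝ) : ℂ) * fderiv ℝ H u u := by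
        rw [fp_expand (fderiv ℝ H u) u, fp_expand (fderiv ℝ H u) σ, Finset.mul_sum, Finset.mul_sum,
          ← Finset.sum_add_distrib]
        refine Finset.sum_congr rfl fun i _ => ?_
        rw [← mul_assoc, ← mul_assoc, ← Complex.ofReal_mul, ← Complex.ofReal_mul, ← add_mul, ← Complex.ofReal_add,
          fp_fderiv_smul_inner σ _ (fpW_contDiff τ κ (p - 2) d), fpW_fderiv, fpW, r2, r4,
          real_inner_comm σ (EuclideanSpace.single i 1)]
        congr 2
        ring
      have e1 : ⟪u, σ⟫_ℝ * fpW τ κ (p - 2) u = jb u ^ p * (⟪u, σ⟫_ℝ * ((τ + ‖u‖ ^ 2) * fpc κ u ^ 2 / jb u ^ 2)) := by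
        rw [fpW, r2]; ring
      simp only [hB2]
      rw [e0, e1]
      generalize ((∑ i : Fin d, ‖fderiv ℝ H u (EuclideanSpace.single i 1)‖ ^ 2 : ℝ) : ℂ) = D2
      simp only [Complex.ofReal_mul]; ring
    have E3 : B3 u = jb u ^ p * ((fpc κ u ^ 3 * jb u + ⟪u, σ⟫_ℝ * (⟪u, σ⟫_ℝ * (-6 * fpc κ u ^ 2 * κ * jb u + fpc κ u ^ 3 * (p + 1) / jb u))) * ‖H u‖ ^ 2
          + ⟪u, σ⟫_ℝ * (fpc κ u ^ 3 * jb u) * (2 * ((starRingEnd ℂ) (H u) * fderiv ℝ H u σ).re)) := by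
      simp only [hB3]
      rw [fp_fderiv_smul_inner σ _ (fpM_contDiff κ (p + 1) d), fpM_fderiv, fpM, r3, r1,
        real_inner_self_eq_norm_sq, hσ]
      ring
    rw [E1, E2, E3, Complex.re_ofReal_mul, Complex.im_ofReal_mul, fpM, r1]
    have := mul_le_mul_of_nonneg_left hP ha.le
    rw [hC]
    refine le_trans (le_of_eq ?_) (this.trans (le_of_eq ?_))
    · ring
    · ring
  have j1 : Integrable (fun u => (B1 u).re) := i1.re
  have j2 : Integrable (fun u => (B2 u).im) := i2.im
  have y1 : ∫ u, (B1 u).re = 0 := by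
    have := integral_re i1
    rw [z1] at this; simpa using this
  have y2 : ∫ u, (B2 u).im = 0 := by
    have := integral_im i2
    rw [z2] at this; simpa using this
  have k1 : Integrable (fun u => C * ((‖H u‖ ^ 2 + ‖G u‖ ^ 2) * jb u ^ p)) := hI.const_mul C
  have k2 : Integrable (fun u => (30 + 2 * |p|) * (B1 u).re) := j1.const_mul _
  have k3 : Integrable (fun u => (14 + |p|) * (B2 u).im) := j2.const_mul _
  have k4 : Integrable (fun u => C * ((‖H u‖ ^ 2 + ‖G u‖ ^ 2) * jb u ^ p) + (30 + 2 * |p|) * (B1 u).re) := k1.add k2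
  have k5 : Integrable (fun u => C * ((‖H u‖ ^ 2 + ‖G u‖ ^ 2) * jb u ^ p) + (30 + 2 * |p|) * (B1 u).re
    - (14 + |p|) * (B2 u).im) := k4.sub k3
  calc _ ≤ ∫ u, (C * ((‖H u‖ ^ 2 + ‖G u‖ ^ 2) * jb u ^ p)
      + (30 + 2 * |p|) * (B1 u).re - (14 + |p|) * (B2 u).im + B3 u) :=
        integral_mono hI0 (k5.add i3) hpt
    _ = _ := by
      rw [integral_add k5 i3, integral_sub k4 k3, integral_add k1 k2,
        MeasureTheory.integral_const_mul, MeasureTheory.integral_const_mul, MeasureTheory.integral_const_mul, y1, y2, z3]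
      ring

/-- **Gain of polynomial decay for the rescaled Fokker–Planck resolvent equation**
(Lemma 6.3 of the paper). -/
theorem fp_gain_of_decay
    (d : ℕ) (hd : 1 ≤ d) (α : ℝ) (hα0 : 0 ≤ α) (hα4 : α ≤ 4) :
    ∃ g : ℝ, 0 < g ∧ ∀ q : ℝ, -2 ≤ q → ∃ C > (0 : ℝ),
      ∀ η : ℝ, 0 < η → η ≤ 1 → ∀ σ : Vs d, ‖σ‖ = 1 →
        ∀ H G : Vs d → ℂ, ContDiff ℝ 2 H → ContDiff ℝ 2 G →
          (∫⁻ u : Vs d, ENNReal.ofReal (‖H u‖ ^ 2 * jb u ^ (q - (d : ℝ) - α))) < ⊤ →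
          (∫⁻ u : Vs d, ENNReal.ofReal (‖G u‖ ^ 2 * jb u ^ (q - (d : ℝ) - α))) < ⊤ →
          (∀ u : Vs d,
            -((η ^ ((2 : ℝ) / 3) + ‖u‖ ^ 2 : ℝ) : ℂ) * laplC H u
                + (((d : ℝ) + α : ℝ) : ℂ) * fderiv ℝ H u u
                - Complex.I * ((⟪u, σ⟫_ℝ : ℝ) : ℂ) *
                    ((η ^ ((2 : ℝ) / 3) + ‖u‖ ^ 2 : ℝ) : ℂ) * H u
              = G u) →
          (∫⁻ u : Vs d, ENNReal.ofReal (‖H u‖ ^ 2 * jb u ^ (q + g - (d : ℝ) - α)))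
            ≤ ENNReal.ofReal C *
                ((∫⁻ u : Vs d, ENNReal.ofReal (‖G u‖ ^ 2 * jb u ^ (q - (d : ℝ) - α)))
                  + ∫⁻ u : Vs d, ENNReal.ofReal (‖H u‖ ^ 2 * jb u ^ (q - (d : ℝ) - α))) := by
  refine ⟨1, one_pos, fun q hq => ?_⟩
  set p : ℝ := q - (d : ℝ) - α with hp
  set C := (16 + |p|) * (20 + |p| + ((d : ℝ) + α)) ^ 2 * 10 with hC
  have hC0 : 0 < C := by positivity
  refine ⟨C, hC0, ?_⟩
  intro η hη hη1 σ hσ H G hH hG hHi hGi heq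
  have hjc : Continuous (fun u : Vs d => jb u ^ p) := (jb_contDiff p d).continuous
  have hjn : ∀ (r : ℝ) (u : Vs d), 0 ≤ jb u ^ r := fun r u =>
    Real.rpow_nonneg (by linarith [fp_jb_one u]) _
  have integ : ∀ F : Vs d → ℂ, ContDiff ℝ 2 F →
      (∫⁻ u : Vs d, ENNReal.ofReal (‖F u‖ ^ 2 * jb u ^ p)) < ⊤ →
      Integrable (fun u => ‖F u‖ ^ 2 * jb u ^ p) := by
    intro F hF hfin
    refine ⟨((hF.continuous.norm.pow 2).mul hjc).aestronglyMeasurable, ?_⟩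
    rw [hasFiniteIntegral_iff_ofReal (Eventually.of_forall fun u => mul_nonneg (by positivity) (hjn p u))]
    exact hfin
  have iH := integ H hH hHi
  have iG := integ G hG hGi
  have hI : Integrable (fun u => (‖H u‖ ^ 2 + ‖G u‖ ^ 2) * jb u ^ p) := by
    simp only [add_mul]
    exact iH.add iG
  have hR : ENNReal.ofReal (∫ u, (‖H u‖ ^ 2 + ‖G u‖ ^ 2) * jb u ^ p) =
      (∫⁻ u : Vs d, ENNReal.ofReal (‖G u‖ ^ 2 * jb u ^ p))
        + ∫⁻ u : Vs d, ENNReal.ofReal (‖H u‖ ^ 2 * jb u ^ p) := by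
    simp only [add_mul]
    rw [integral_add iH iG, ENNReal.ofReal_add (integral_nonneg fun u => mul_nonneg (by positivity) (hjn p u))
      (integral_nonneg fun u => mul_nonneg (by positivity) (hjn p u)),
      ofReal_integral_eq_lintegral_ofReal iH (Eventually.of_forall fun u => mul_nonneg (by positivity) (hjn p u)),
      ofReal_integral_eq_lintegral_ofReal iG (Eventually.of_forall fun u => mul_nonneg (by positivity) (hjn p u)),
      add_comm]
  have hτ : 0 < η ^ ((2 : ℝ) / 3) := Real.rpow_pos_of_pos hη _
  have hτ1 : η ^ ((2 : ℝ) / 3) ≤ 1 := Real.rpow_le_one hη.le hη1 (by norm_num)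
  have hcut : ∀ n : ℕ, ∫⁻ u : Vs d, ENNReal.ofReal (‖H u‖ ^ 2 * fpM (1 / ((n : ℝ) + 1)) (p + 1) u) ≤
      ENNReal.ofReal C * ((∫⁻ u : Vs d, ENNReal.ofReal (‖G u‖ ^ 2 * jb u ^ p))
        + ∫⁻ u : Vs d, ENNReal.ofReal (‖H u‖ ^ 2 * jb u ^ p)) := by
    intro n
    obtain ⟨a1, a2⟩ := fp_cutoff_est d α hα0 p (1 / ((n : ℝ) + 1)) η (by positivity)
      (by rw [div_le_one (by positivity)]; linarith [(Nat.cast_nonneg n : (0:ℝ) ≤ n)]) _ hτ hτ1 σ hσ H G hH hI heq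
    rw [← hR, ← ENNReal.ofReal_mul hC0.le, ← ofReal_integral_eq_lintegral_ofReal a1
      (Eventually.of_forall fun u => mul_nonneg (by positivity)
        (mul_nonneg (pow_nonneg (le_max_left _ _) _) (hjn _ u)))]
    exact ENNReal.ofReal_le_ofReal a2
  have hlim : ∀ u : Vs d, Tendsto (fun n : ℕ => ENNReal.ofReal (‖H u‖ ^ 2 * fpM (1 / ((n : ℝ) + 1)) (p + 1) u))
      atTop (𝓝 (ENNReal.ofReal (‖H u‖ ^ 2 * jb u ^ (q + 1 - (d : ℝ) - α)))) := by
    intro u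
    refine ENNReal.tendsto_ofReal (Tendsto.const_mul _ ?_)
    have e : q + 1 - (d : ℝ) - α = p + 1 := by rw [hp]; ring
    rw [e]
    have t1 : Tendsto (fun n : ℕ => fpc (1 / ((n : ℝ) + 1)) u) atTop (𝓝 1) := by
      have t2 : Tendsto (fun n : ℕ => 1 - 1 / ((n : ℝ) + 1) * ‖u‖ ^ 2) atTop (𝓝 (1 - 0 * ‖u‖ ^ 2)) :=
        (tendsto_one_div_add_atTop_nhds_zero_nat.mul_const _).const_sub 1
      have := (tendsto_const_nhds (x := (0:ℝ))).max t2
      simpa [fpc] using this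
    have := (t1.pow 3).mul_const (jb u ^ (p + 1))
    simpa [fpM] using this
  calc _ = ∫⁻ u : Vs d, liminf (fun n : ℕ => ENNReal.ofReal (‖H u‖ ^ 2 * fpM (1 / ((n : ℝ) + 1)) (p + 1) u)) atTop :=
        lintegral_congr fun u => ((hlim u).liminf_eq).symm
    _ ≤ liminf (fun n : ℕ => ∫⁻ u : Vs d, ENNReal.ofReal (‖H u‖ ^ 2 * fpM (1 / ((n : ℝ) + 1)) (p + 1) u)) atTop := by
        refine lintegral_liminf_le fun n => ?_
        exact (((hH.continuous.norm.pow 2).mul (fpM_contDiff _ (p + 1) d).continuous).measurable).ennreal_ofReal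
    _ ≤ _ := by
        refine (liminf_le_liminf (Eventually.of_forall hcut)).trans ?_
        simp

end
end

section
/- Explicit solution of the limiting profile equation for the Fokker–Planck case α = 4. Let d ≥ 1 and σ ∈ S^{d−1}. The function Ω : ℝ^d → ℝ defined by Ω(u) := |u|² (u·σ)/(d+8) satisfies Ω(0) = 0 and, for all u ∈ ℝ^d, −|u|² Δ_u Ω(u) + (d+4) u·∇_u Ω(u) = (u·σ) |u|². -/
open MeasureTheory Real Filter Topology intervalIntegral
open scoped InnerProductSpace

noncomputable section

/-- Directional derivative of the profile. -/
lemma profile_fderiv {d : ℕ} (σ : Vs d) (c : ℝ) (w e : Vs d) :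
    fderiv ℝ (fun w : Vs d => ‖w‖ ^ 2 * ⟪w, σ⟫_ℝ / c) w e
      = (2 * ⟪w, e⟫_ℝ * ⟪w, σ⟫_ℝ + ‖w‖ ^ 2 * ⟪e, σ⟫_ℝ) / c := by
  have h1 : HasFDerivAt (fun w : Vs d => ‖w‖ ^ 2) (2 • innerSL ℝ w) w :=
    (hasStrictFDerivAt_norm_sq w).hasFDerivAt
  have h2 : HasFDerivAt (fun w : Vs d => ⟪w, σ⟫_ℝ) (innerSL ℝ σ) w := by
    have := (innerSL ℝ σ).hasFDerivAt (x := w)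
    refine this.congr_of_eventuallyEq (Eventually.of_forall fun x => ?_)
    simp [real_inner_comm]
  have h3 := (h1.mul h2).mul_const c⁻¹
  simp only [div_eq_mul_inv]
  refine (congrArg (fun L : Vs d →L[ℝ] ℝ => L e) (HasFDerivAt.fderiv h3)).trans ?_
  simp [-PiLp.inner_apply, -real_inner_self_eq_norm_sq, real_inner_comm]
  ring

/-- Second directional derivative of the profile. -/
lemma profile_fderiv2 {d : ℕ} (σ : Vs d) (c : ℝ) (u e : Vs d) :
    fderiv ℝ (fun w => fderiv ℝ (fun w : Vs d => ‖w‖ ^ 2 * ⟪w, σ⟫_ℝ / c) w e) u e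
      = (2 * ⟪e, e⟫_ℝ * ⟪u, σ⟫_ℝ + 4 * (⟪u, e⟫_ℝ * ⟪e, σ⟫_ℝ)) / c := by
  simp only [profile_fderiv]
  have h1 : HasFDerivAt (fun w : Vs d => ‖w‖ ^ 2) (2 • innerSL ℝ u) u :=
    (hasStrictFDerivAt_norm_sq u).hasFDerivAt
  have h2 : ∀ τ : Vs d, HasFDerivAt (fun w : Vs d => ⟪w, τ⟫_ℝ) (innerSL ℝ τ) u := by
    intro τ
    have := (innerSL ℝ τ).hasFDerivAt (x := u)
    refine this.congr_of_eventuallyEq (Eventually.of_forall fun x => ?_)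
    simp [real_inner_comm]
  have h3 := (((((h2 e).const_mul 2).mul (h2 σ))).add (h1.mul_const ⟪e, σ⟫_ℝ)).mul_const c⁻¹
  simp only [div_eq_mul_inv]
  refine (congrArg (fun L : Vs d →L[ℝ] ℝ => L e) (HasFDerivAt.fderiv h3)).trans ?_
  simp [-PiLp.inner_apply, -real_inner_self_eq_norm_sq, real_inner_comm]
  ring

/-- **Explicit solution of the limiting profile equation for the Fokker–Planck case
`α = 4`** (Corollary 1.13 of the paper): `Ω(u) = |u|²(u·σ)/(d+8)` satisfies `Ω(0)=0` and
`-|u|² ΔΩ + (d+4) u·∇Ω = (u·σ)|u|²`. -/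
theorem fp_limit_profile_alpha_four
    (d : ℕ) (hd : 1 ≤ d) (σ : Vs d) (hσ : ‖σ‖ = 1) :
    (fun u : Vs d => ‖u‖ ^ 2 * ⟪u, σ⟫_ℝ / ((d : ℝ) + 8)) 0 = 0 ∧
    ∀ u : Vs d,
      -‖u‖ ^ 2 * laplR (fun w : Vs d => ‖w‖ ^ 2 * ⟪w, σ⟫_ℝ / ((d : ℝ) + 8)) u
          + ((d : ℝ) + 4) *
              fderiv ℝ (fun w : Vs d => ‖w‖ ^ 2 * ⟪w, σ⟫_ℝ / ((d : ℝ) + 8)) u u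
        = ⟪u, σ⟫_ℝ * ‖u‖ ^ 2 := by
  refine ⟨by simp, fun u => ?_⟩
  have hc : (d : ℝ) + 8 ≠ 0 := by positivity
  have hs : ∑ i : Fin d, ⟪u, EuclideanSpace.single i (1 : ℝ)⟫_ℝ
      * ⟪EuclideanSpace.single i (1 : ℝ), σ⟫_ℝ = ⟪u, σ⟫_ℝ := by
    simpa using (EuclideanSpace.basisFun (Fin d) ℝ).sum_inner_mul_inner u σ
  have he : ∀ i : Fin d, ⟪EuclideanSpace.single i (1 : ℝ),
      EuclideanSpace.single i (1 : ℝ)⟫_ℝ = 1 := by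
    intro i
    simp
  have hl : laplR (fun w : Vs d => ‖w‖ ^ 2 * ⟪w, σ⟫_ℝ / ((d : ℝ) + 8)) u
      = (2 * d + 4) * ⟪u, σ⟫_ℝ / ((d : ℝ) + 8) := by
    unfold laplR
    simp only [profile_fderiv2, he]
    rw [← Finset.sum_div, Finset.sum_add_distrib, ← Finset.mul_sum, ← Finset.mul_sum, hs]
    simp only [Finset.sum_const, Finset.card_univ, Fintype.card_fin, nsmul_eq_mul]
    ring
  rw [hl, profile_fderiv, real_inner_self_eq_norm_sq]
  field_simp
  ring

end
end
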